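/- There exists an area-preserving, minimal, C^∞ pseudo-rotation f of T² which has bounded mean motion and super-Liouvillean totally irrational rotation vector, and which is not equicontinuous in the following strong sense: for every ε > 0 there exist x, y ∈ T² with d(x,y) < ε and an integer N > 0 such that d(f^N(x), f^N(y)) ≥ 1/1000. In particular, f is semi-conjugate to an irrational translation via a map homotopic to the identity, but is not topologically conjugate to any translation. -/

import Mathlib

open Filter Topology MeasureTheory

noncomputable section

/-- The plane ℝ². -/
abbrev R2 : Type := ℝ × ℝ

/-- The Euclidean norm on ℝ². -/
def enorm2 (v : R2) : ℝ := Real.sqrt (v.1 ^ 2 + v.2 ^ 2)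

/-- The two-torus 𝕋² = ℝ²/ℤ². -/
abbrev T2 : Type := AddCircle (1 : ℝ) × AddCircle (1 : ℝ)

/-- The covering projection π : ℝ² → 𝕋². -/
def pr2 (v : R2) : T2 := ((v.1 : AddCircle (1 : ℝ)), (v.2 : AddCircle (1 : ℝ)))

/-- The integer vector (v₁, v₂) regarded as a point of ℝ². -/
def intVec (v : ℤ × ℤ) : R2 := ((v.1 : ℝ), (v.2 : ℝ))

/-- The distance on 𝕋² induced by the Euclidean metric on ℝ². -/
def distT2 (x y : T2) : ℝ :=
  sInf {r | ∃ a b : R2, pr2 a = x ∧ pr2 b = y ∧ r = enorm2 (a - b)}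

/-- The C⁰ distance between two maps of 𝕋². -/
def dC0 (f g : T2 → T2) : ℝ := ⨆ x : T2, distT2 (f x) (g x)

/-- `F : ℝ² → ℝ²` is a lift of `f : 𝕋² → 𝕋²`, i.e. π ∘ F = f ∘ π. -/
def IsLift (F : R2 → R2) (f : T2 → T2) : Prop := ∀ z : R2, pr2 (F z) = f (pr2 z)

/-- `F` commutes with the deck transformations of π : ℝ² → 𝕋². -/
def Equivariant (F : R2 → R2) : Prop :=
  ∀ (z : R2) (v : ℤ × ℤ), F (z + intVec v) = F z + intVec v

/-- `f` is a homeomorphism of 𝕋² isotopic to the identity (equivalently, admitting an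
equivariant lift to ℝ²). -/
def IsotopicToId (f : T2 → T2) : Prop :=
  IsHomeomorph f ∧ ∃ F : R2 → R2, IsHomeomorph F ∧ IsLift F f ∧ Equivariant F

/-- The Misiurewicz–Ziemian rotation set of a lift `F`. -/
def rotSet (F : R2 → R2) : Set R2 :=
  {v | ∃ (z : ℕ → R2) (n : ℕ → ℕ), Tendsto n atTop atTop ∧
      Tendsto (fun i => ((n i : ℝ))⁻¹ • (F^[n i] (z i) - z i)) atTop (𝓝 v)}

/-- Bounded mean motion, with bound κ, for a lift `F` with rotation vector `ω`:
‖Fⁿ(z) − z − nω‖ ≤ κ for all z and n. -/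
def BoundedMeanMotion (F : R2 → R2) (ω : R2) (κ : ℝ) : Prop :=
  ∀ (z : R2) (n : ℕ), enorm2 (F^[n] z - z - (n : ℝ) • ω) ≤ κ

/-- The standard scalar product on ℝ². -/
def inner2 (u v : R2) : ℝ := u.1 * v.1 + u.2 * v.2

/-- v^⊥ = (−v₂, v₁)/‖v‖. -/
def perp2 (v : R2) : R2 := (-v.2 / enorm2 v, v.1 / enorm2 v)

/-- Bounded deviation parallel to `v`, with bound κ, for a lift `F` with rotation vector `ω`:
|⟨Fⁿ(z) − z − nω, v^⊥⟩| ≤ κ for all z and n. -/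
def BoundedDeviation (F : R2 → R2) (ω : R2) (v : R2) (κ : ℝ) : Prop :=
  ∀ (z : R2) (n : ℕ), |inner2 (F^[n] z - z - (n : ℝ) • ω) (perp2 v)| ≤ κ

/-- ‖ω‖_{𝕋²} = min over integer vectors z of ‖ω − z‖. -/
def normT2 (ω : R2) : ℝ := ⨅ v : ℤ × ℤ, enorm2 (ω - intVec v)

/-- The super-Liouvillean condition: liminf_{n→∞} n⁻¹ ln ‖nω‖_{𝕋²} = −∞. -/
def SuperLiouville (ω : R2) : Prop :=
  ∀ M : ℝ, ∃ᶠ n : ℕ in atTop, (n : ℝ)⁻¹ * Real.log (normT2 ((n : ℝ) • ω)) < M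

/-- The strong super-Liouvillean condition: liminf_{n→∞} n⁻¹ aⁿ ln ‖nω‖_{𝕋²} = −∞. -/
def StrongSuperLiouville (a : ℝ) (ω : R2) : Prop :=
  ∀ M : ℝ, ∃ᶠ n : ℕ in atTop, (n : ℝ)⁻¹ * a ^ n * Real.log (normT2 ((n : ℝ) • ω)) < M

/-- ω ∈ ℝ² is irrational if ω ∉ ℚ². -/
def IrrationalVec (ω : R2) : Prop := ¬ ∃ q : ℚ × ℚ, ω = ((q.1 : ℝ), (q.2 : ℝ))

/-- ω is totally irrational if ω₁, ω₂, 1 are rationally independent. -/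
def TotallyIrrationalVec (ω : R2) : Prop :=
  ∀ d1 d2 e : ℤ, (d1 : ℝ) * ω.1 + (d2 : ℝ) * ω.2 + (e : ℝ) = 0 → d1 = 0 ∧ d2 = 0 ∧ e = 0

/-- ω is semi-irrational: irrational but not totally irrational. -/
def SemiIrrationalVec (ω : R2) : Prop := IrrationalVec ω ∧ ¬ TotallyIrrationalVec ω

/-- `v` is a character vector of the semi-irrational vector ω. -/
def IsCharacterVector (ω : R2) (v : R2) : Prop :=
  ∃ c d : ℤ, Int.gcd c d = 1 ∧ (∃ e : ℚ, (c : ℝ) * ω.1 + (d : ℝ) * ω.2 + (e : ℝ) = 0) ∧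
    v = ((d : ℝ), (-c : ℝ))

/-- `f` is Hölder continuous with exponent `a`. -/
def HolderMap (a : ℝ) (f : T2 → T2) : Prop :=
  ∃ C : ℝ, ∀ x y : T2, distT2 (f x) (f y) ≤ C * distT2 x y ^ a

/-- C⁰-rigidity: liminf_{n→∞} d_{C⁰}(fⁿ, Id) = 0. -/
def C0Rigid (f : T2 → T2) : Prop :=
  ∀ ε : ℝ, 0 < ε → ∃ᶠ n : ℕ in atTop, dC0 (f^[n]) id < ε

/-- `f` is a C^r diffeomorphism of 𝕋², expressed via a C^r lift with a C^r inverse. -/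
def IsCrDiffeo (r : ℕ∞) (f : T2 → T2) : Prop :=
  ∃ F G : R2 → R2, IsLift F f ∧ Function.LeftInverse G F ∧ Function.RightInverse G F ∧
    ContDiff ℝ r F ∧ ContDiff ℝ r G

/-- C^k-rigidity: some sequence of iterates f^{n_j}, n_j → ∞, converges to the identity in the
C^k topology, i.e. admits lifts converging to the identity uniformly together with all
derivatives of order ≤ k. -/
def CkRigid (k : ℕ∞) (f : T2 → T2) : Prop :=
  ∃ n : ℕ → ℕ, Tendsto n atTop atTop ∧
    ∃ F : ℕ → R2 → R2, (∀ j, IsLift (F j) (f^[n j])) ∧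
      ∀ i : ℕ, (i : ℕ∞) ≤ k →
        Tendsto (fun j => ⨆ z : R2, ‖iteratedFDeriv ℝ i (fun w => F j w - w) z‖)
          atTop (𝓝 0)

/-- ‖x‖_𝕋 : the distance from x ∈ ℝ to the nearest integer. -/
def dT (x : ℝ) : ℝ := |x - round x|

/-- `q` is the sequence of denominators of the best rational approximations of β. -/
def BestDenomSeq (β : ℝ) (q : ℕ → ℕ) : Prop :=
  q 0 = 1 ∧ ∀ n : ℕ,
    q n < q (n + 1) ∧
    (∀ m : ℕ, 1 ≤ m → m < q (n + 1) → dT ((q n : ℝ) * β) ≤ dT ((m : ℝ) * β)) ∧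
    dT ((q n : ℝ) * β) < 1 / (q (n + 1) : ℝ)

/-- β is of non-Brjuno type: Σ_n (ln q_{n+1})/q_n = ∞. -/
def NonBrjunoNum (β : ℝ) : Prop :=
  ∀ q : ℕ → ℕ, BestDenomSeq β q → ¬ Summable fun n => Real.log (q (n + 1) : ℝ) / (q n : ℝ)

/-- Character data of a semi-irrational vector ω: (c,d) ∈ ℤ² with gcd(c,d)=1 and
e = p/q ∈ ℚ in lowest terms with q > 0 such that c ω₁ + d ω₂ + p/q = 0. -/
def IsCharData (ω : R2) (c d p q : ℤ) : Prop :=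
  Int.gcd c d = 1 ∧ Int.gcd p q = 1 ∧ 0 < q ∧
    (c : ℝ) * ω.1 + (d : ℝ) * ω.2 + (p : ℝ) / (q : ℝ) = 0

/-- ω is of strong non-Brjuno type: its character frequency 𝓕(ω̄) is of non-Brjuno type. -/
def StrongNonBrjuno (ω : R2) : Prop :=
  ∃ c d p q a b : ℤ, IsCharData ω c d p q ∧ a * d - b * c = 1 ∧
    NonBrjunoNum (dT ((q : ℝ) * ((a : ℝ) * ω.1 + (b : ℝ) * ω.2)))

/-- The linear action of the integer matrix [[a,b],[c,d]] on ℝ². -/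
def AactZ (a b c d : ℤ) (z : R2) : R2 :=
  ((a : ℝ) * z.1 + (b : ℝ) * z.2, (c : ℝ) * z.1 + (d : ℝ) * z.2)

/-- The operator norm (w.r.t. the Euclidean norm) of the matrix [[a,b],[c,d]]. -/
def AOpNormZ (a b c d : ℤ) : ℝ :=
  sSup {r | ∃ u : R2, enorm2 u ≤ 1 ∧
    r = enorm2 ((a : ℝ) * u.1 + (b : ℝ) * u.2, (c : ℝ) * u.1 + (d : ℝ) * u.2)}

/-- Membership in the class 𝒞_{κ,ω̄}: pseudo-rotations with rotation vector ω̄ mod ℤ²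
having bounded mean motion with bound κ. -/
def MemC (κ : ℝ) (w : T2) (f : T2 → T2) : Prop :=
  IsotopicToId f ∧ ∃ (F : R2 → R2) (ω : R2),
    IsLift F f ∧ rotSet F = {ω} ∧ pr2 ω = w ∧ BoundedMeanMotion F ω κ

/-- Membership in the class 𝒟_{κ,ω̄,v}: pseudo-rotations with rotation vector ω̄ mod ℤ²
having bounded deviation parallel to v with bound κ. -/
def MemD (κ : ℝ) (w : T2) (v : R2) (f : T2 → T2) : Prop :=
  IsotopicToId f ∧ ∃ (F : R2 → R2) (ω : R2),
    IsLift F f ∧ rotSet F = {ω} ∧ pr2 ω = w ∧ BoundedDeviation F ω v κ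

/-- `h : 𝕋² → 𝕋²` is homotopic to the identity (characterised by admitting an equivariant
continuous lift). -/
def HomotopicToIdMap (h : T2 → T2) : Prop :=
  ∃ H : R2 → R2, Continuous H ∧ IsLift H h ∧ Equivariant H

/-- `f` is regularly semi-conjugate to the translation T_w : x ↦ x + w, i.e. semi-conjugate via
a continuous surjection homotopic to the identity. -/
def RegSemiConj (f : T2 → T2) (w : T2) : Prop :=
  ∃ h : T2 → T2, Continuous h ∧ Function.Surjective h ∧ HomotopicToIdMap h ∧
    ∀ x : T2, h (f x) = h x + w

/-- `f` is topologically conjugate to a translation of 𝕋². -/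
def TopLinearizable (f : T2 → T2) : Prop :=
  ∃ (w : T2) (h : T2 → T2), IsHomeomorph h ∧ ∀ x : T2, h (f x) = h x + w

/-- `f` is minimal: every orbit is dense. -/
def MinimalMap (f : T2 → T2) : Prop :=
  ∀ x : T2, Dense (Set.range fun n : ℕ => f^[n] x)

/-- The open ball in 𝕋² for the Euclidean-induced distance. -/
def ballT2 (z : T2) (r : ℝ) : Set T2 := {y | distT2 z y < r}

/-- The diameter of a subset of 𝕋² for the Euclidean-induced distance. -/
def diamT2 (S : Set T2) : ℝ := sSup {r | ∃ x ∈ S, ∃ y ∈ S, r = distT2 x y}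

/-- The Euclidean diameter of a subset of ℝ². -/
def diamE (S : Set R2) : ℝ := sSup {r | ∃ x ∈ S, ∃ y ∈ S, r = enorm2 (x - y)}

/-- `F` is a bounded (measurable) fundamental domain for the ℤ²-action on ℝ². -/
def IsBoundedFundDom (F : Set R2) : Prop :=
  MeasurableSet F ∧ Bornology.IsBounded F ∧
    (∀ x : R2, ∃ v : ℤ × ℤ, x - intVec v ∈ F) ∧
    ∀ v : ℤ × ℤ, v ≠ 0 → F ∩ ((fun x => x + intVec v) '' F) = ∅

/-- `D` is an open topological disc in 𝕋². -/
def IsTopDisc (D : Set T2) : Prop :=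
  IsOpen D ∧ Nonempty (D ≃ₜ Metric.ball (0 : R2) 1)

/-- `D` is simple with respect to the fundamental domain `F`: some connected component of
π⁻¹(D) is contained in `F`. -/
def IsSimpleDisc (D : Set T2) (F : Set R2) : Prop :=
  ∃ x ∈ pr2 ⁻¹' D, connectedComponentIn (pr2 ⁻¹' D) x ⊆ F

/-- `u` is the rotation vector of `g`, defined as the mean displacement
∫_{𝕋²} (g̃(x̃) − x̃) dλ(x) mod ℤ² of an equivariant lift `G` of `g`. -/
def IsRotOf (g : T2 → T2) (u : T2) : Prop :=
  ∃ (G : R2 → R2) (Φ : T2 → R2), Continuous G ∧ IsLift G g ∧ Equivariant G ∧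
    (∀ z : R2, Φ (pr2 z) = G z - z) ∧ u = pr2 (∫ x : T2, Φ x)

/-- The set Γ = ((ℚ×ℝ)/ℤ²) ∪ ((ℝ×ℚ)/ℤ²) of points of 𝕋² with at least one rational
coordinate. -/
def GammaSet : Set T2 :=
  {x | (∃ q : ℚ, x.1 = ((q : ℝ) : AddCircle (1 : ℝ))) ∨
       (∃ q : ℚ, x.2 = ((q : ℝ) : AddCircle (1 : ℝ)))}

/-!
Anosov–Katok construction. The map is the limit of conjugates `H n ∘ T (w n) ∘ (H n)⁻¹` of
translations by rational vectors `w n` of denominator `q n`. One passes from `H n` to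
`H (n + 1) = H n ∘ A` with `A` a composition of two shears commuting with the translations by
vectors of `(1 / q (n + 1)) ℤ²`; hence conjugating `T (w (n + 1))` by `H (n + 1)` is the same as
conjugating it by `H n`, and taking `w (n + 1)` close enough to `w n` makes the sequence converge in
`C^∞`, with a super-Liouvillean limit `ω`. The shears move points by at most `1 / q n`, a summable
amount, so the inverse conjugacies converge uniformly to a semi-conjugacy to the translation by `ω`,
at bounded distance from the identity. The conjugacies `H n` themselves do not converge: they are
odd and send some points `u n → 0` close to `(0, 1/4)`. The points `H n (2 u n)` and `0`, which are
close to each other, are then carried near `(0, 1/4)` and `-(0, 1/4)` by one and the same iterate.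
-/

/-! ### Limits of sequences and of maps -/

section GeometricLimits

variable {X α : Type*} [PseudoMetricSpace α] {C : ℝ}

lemma dist_le_of_dist_succ_le_geometric {u : ℕ → α} {l : α} {n : ℕ}
    (h : ∀ k ≥ n, dist (u k) (u (k + 1)) ≤ C / 2 ^ k) (hl : Tendsto u atTop (𝓝 l)) :
    dist (u n) l ≤ 2 * (C / 2 ^ n) := by
  have hstep (k : ℕ) : dist (u (n + k)) (u (n + (k + 1))) ≤ 2 * (C / 2 ^ n) / 2 / 2 ^ k :=
    (h (n + k) (Nat.le_add_right n k)).trans_eq (by rw [pow_add]; field_simp)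
  exact dist_le_of_le_geometric_two_of_tendsto₀ hstep
    (hl.comp (tendsto_atTop_mono (fun k => Nat.le_add_left k n) tendsto_id))

lemma exists_tendstoUniformly_of_dist_succ_le_geometric [CompleteSpace α] {A : ℕ → X → α}
    (h : ∀ n x, dist (A n x) (A (n + 1) x) ≤ C / 2 ^ n) :
    ∃ B : X → α, TendstoUniformly A B atTop := by
  have hlim (x : X) : ∃ l, Tendsto (A · x) atTop (𝓝 l) :=
    cauchySeq_tendsto_of_complete
      (cauchySeq_of_le_geometric_two (C := 2 * C) fun n => (h n x).trans_eq (by ring))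
  choose B hB using hlim
  refine ⟨B, Metric.tendstoUniformly_iff.2 fun ε hε => ?_⟩
  have hgeom : Tendsto (fun n : ℕ => 2 * (C / 2 ^ n)) atTop (𝓝 0) := by
    simpa [div_eq_mul_inv] using
      ((tendsto_inv_atTop_zero.comp (tendsto_pow_atTop_atTop_of_one_lt one_lt_two)).const_mul
        C).const_mul (2 : ℝ)
  filter_upwards [hgeom.eventually_lt_const hε] with n hn x
  rw [dist_comm]
  exact (dist_le_of_dist_succ_le_geometric (fun k _ => h k x) (hB x)).trans_lt hn

end GeometricLimits

section SmoothLimits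

variable {E F : Type*} [NormedAddCommGroup E] [NormedSpace ℝ E] [NormedAddCommGroup F]
  [NormedSpace ℝ F]

lemma contDiff_of_tendsto_of_summable_iteratedFDeriv_sub [CompleteSpace F] {G : ℕ → E → F}
    {f : E → F} {v : ℕ → ℝ} (hG : ∀ n, ContDiff ℝ (⊤ : ℕ∞) (G n)) (hv : Summable v)
    (h : ∀ n, ∀ k ≤ n, ∀ z, ‖iteratedFDeriv ℝ k (fun z => G (n + 1) z - G n z) z‖ ≤ v n)
    (hf : ∀ z, Tendsto (G · z) atTop (𝓝 (f z))) : ContDiff ℝ (⊤ : ℕ∞) f := by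
  have hsum : ContDiff ℝ (⊤ : ℕ∞) fun z => ∑' n, (G (n + 1) z - G n z) := by
    refine contDiff_tsum_of_eventually (v := fun _ => v) (fun n => (hG (n + 1)).sub (hG n))
      (fun _ _ => hv) fun k _ => ?_
    rw [Nat.cofinite_eq_atTop]
    filter_upwards [eventually_ge_atTop k] with n hn
    exact h n k hn
  have htelescope : f = fun z => G 0 z + ∑' n, (G (n + 1) z - G n z) := by
    funext z
    have hs : Summable fun n => G (n + 1) z - G n z :=
      .of_norm_bounded hv fun n => norm_iteratedFDeriv_zero (𝕜 := ℝ) (x := z)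
        (f := fun z => G (n + 1) z - G n z) ▸ h n 0 n.zero_le z
    have hpartial := hs.hasSum.tendsto_sum_nat
    simp only [Finset.sum_range_sub fun n => G n z] at hpartial
    rw [tendsto_nhds_unique hpartial ((hf z).sub_const _), add_sub_cancel]
  exact htelescope ▸ (hG 0).add hsum

lemma exists_contDiff_tendstoUniformly [CompleteSpace F] {G : ℕ → E → F} {C : ℝ}
    (hG : ∀ n, ContDiff ℝ (⊤ : ℕ∞) (G n))
    (h : ∀ n, ∀ k ≤ n, ∀ z, ‖iteratedFDeriv ℝ k (fun z => G (n + 1) z - G n z) z‖ ≤ C / 2 ^ n) :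
    ∃ f : E → F, ContDiff ℝ (⊤ : ℕ∞) f ∧ TendstoUniformly G f atTop := by
  have hdist (n : ℕ) (z : E) : dist (G n z) (G (n + 1) z) ≤ C / 2 ^ n := by
    rw [dist_comm, dist_eq_norm]
    simpa using h n 0 n.zero_le z
  have hC : Summable fun n : ℕ => C / 2 ^ n := by
    simpa [div_eq_mul_inv] using summable_geometric_two.mul_left C
  obtain ⟨f, hf⟩ := exists_tendstoUniformly_of_dist_succ_le_geometric hdist
  exact ⟨f, contDiff_of_tendsto_of_summable_iteratedFDeriv_sub hG hC h hf.tendsto_at, hf⟩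

end SmoothLimits

section SmoothFamilies

variable {𝕜 P E F : Type*} [NontriviallyNormedField 𝕜] [NormedAddCommGroup P] [NormedSpace 𝕜 P]
  [NormedAddCommGroup E] [NormedSpace 𝕜 E] [NormedAddCommGroup F] [NormedSpace 𝕜 F]
  {n : WithTop ℕ∞} {k : ℕ} {Φ : P × E → F}

lemma iteratedFDeriv_prodMk_right (hΦ : ContDiff 𝕜 n Φ) (hk : k ≤ n) (p : P) (z : E) :
    iteratedFDeriv 𝕜 k (fun z => Φ (p, z)) z =
      (iteratedFDeriv 𝕜 k Φ (p, z)).compContinuousLinearMap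
        fun _ => ContinuousLinearMap.inr 𝕜 P E := by
  have hcomp : (fun z => Φ (p, z)) =
      (fun w => Φ (w + (p, 0))) ∘ ContinuousLinearMap.inr 𝕜 P E := by
    funext z
    simp
  have htranslate : ContDiff 𝕜 n fun w => Φ (w + (p, 0)) :=
    hΦ.comp (contDiff_id.add contDiff_const)
  rw [hcomp, ContinuousLinearMap.iteratedFDeriv_comp_right _ htranslate _ hk,
    iteratedFDeriv_comp_add_right]
  simp

lemma continuous_norm_iteratedFDeriv_prodMk_right (hΦ : ContDiff 𝕜 n Φ) (hk : k ≤ n) :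
    Continuous fun w : P × E => ‖iteratedFDeriv 𝕜 k (fun z => Φ (w.1, z)) w.2‖ := by
  simp only [iteratedFDeriv_prodMk_right hΦ hk]
  exact ((ContinuousMultilinearMap.compContinuousLinearMapL
    fun _ : Fin k => ContinuousLinearMap.inr 𝕜 P E).continuous.comp
      (hΦ.continuous_iteratedFDeriv hk)).norm

lemma eventually_forall_norm_iteratedFDeriv_le_of_periodic (hΦ : ContDiff 𝕜 n Φ) (hk : k ≤ n)
    {p₀ : P} (h₀ : ∀ z, Φ (p₀, z) = 0) {K : Set E} (hK : IsCompact K)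
    (hper : ∀ z, ∃ v, z + v ∈ K ∧ ∀ p x, Φ (p, x + v) = Φ (p, x)) {ε : ℝ} (hε : 0 < ε) :
    ∀ᶠ p in 𝓝 p₀, ∀ z, ‖iteratedFDeriv 𝕜 k (fun z => Φ (p, z)) z‖ ≤ ε := by
  have hzero (z : E) : ‖iteratedFDeriv 𝕜 k (fun z => Φ (p₀, z)) z‖ = 0 := by simp [h₀]
  have hcompact := hK.eventually_forall_of_forall_eventually (x₀ := p₀)
    (P := fun p z => ‖iteratedFDeriv 𝕜 k (fun z => Φ (p, z)) z‖ < ε) fun z _ =>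
      ((continuous_norm_iteratedFDeriv_prodMk_right hΦ hk).tendsto (p₀, z)).eventually_lt_const
        (by rwa [hzero])
  filter_upwards [hcompact] with p hp z
  obtain ⟨v, hvK, hv⟩ := hper z
  have htranslate : iteratedFDeriv 𝕜 k (fun z => Φ (p, z)) z =
      iteratedFDeriv 𝕜 k (fun z => Φ (p, z)) (z + v) := by
    simp only [← iteratedFDeriv_comp_add_right, hv]
  exact htranslate ▸ (hp _ hvK).le

end SmoothFamilies

lemma measurePreserving_of_tendsto {α β : Type*} [MeasurableSpace α] [TopologicalSpace β]
    [TopologicalSpace.PseudoMetrizableSpace β] [MeasurableSpace β] [BorelSpace β] {μ : Measure α}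
    {ν : Measure β} [IsFiniteMeasure μ] [IsFiniteMeasure ν] {f : α → β} {g : ℕ → α → β}
    (hg : ∀ n, MeasurePreserving (g n) μ ν) (h : ∀ x, Tendsto (g · x) atTop (𝓝 (f x))) :
    MeasurePreserving f μ ν := by
  have hf : Measurable f :=
    measurable_of_tendsto_metrizable (fun n => (hg n).measurable) (tendsto_pi_nhds.2 h)
  refine ⟨hf, ?_⟩
  have := Measure.isFiniteMeasure_map μ f
  refine ext_of_forall_integral_eq_of_IsFiniteMeasure fun φ => ?_
  have hφ {h : α → β} (hh : Measurable h) : ∫ y, φ y ∂μ.map h = ∫ x, φ (h x) ∂μ :=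
    integral_map hh.aemeasurable φ.continuous.measurable.aestronglyMeasurable
  have hlim : Tendsto (fun n => ∫ x, φ (g n x) ∂μ) atTop (𝓝 (∫ x, φ (f x) ∂μ)) :=
    tendsto_integral_of_dominated_convergence (fun _ => ‖φ‖)
      (fun n => (φ.continuous.measurable.comp (hg n).measurable).aestronglyMeasurable)
      (integrable_const _) (fun n => .of_forall fun x => φ.norm_coe_le_norm _)
      (.of_forall fun x => (φ.continuous.tendsto _).comp (h x))
  simp only [← hφ (hg _).measurable, (hg _).map_eq] at hlim
  rw [hφ hf]
  exact (tendsto_nhds_unique tendsto_const_nhds hlim).symm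

/-! ### Topological dynamics -/

lemma uniformEquicontinuous_iterate_of_semiconj_isometry {X Y : Type*} [UniformSpace X]
    [CompactSpace X] [PseudoMetricSpace Y] {f : X → X} {g : Y → Y} (h : X ≃ₜ Y)
    (hg : Isometry g) (hs : Function.Semiconj h f g) :
    UniformEquicontinuous fun n : ℕ => f^[n] := by
  have := h.compactSpace
  have hh := CompactSpace.uniformContinuous_of_continuous h.continuous
  have hh_symm := CompactSpace.uniformContinuous_of_continuous h.symm.continuous
  have hiterate (n : ℕ) (x : X) : f^[n] x = h.symm (g^[n] (h x)) :=
    h.eq_symm_apply.2 (hs.iterate_right n x)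
  have hgn (n : ℕ) (a b : Y) : dist (g^[n] a) (g^[n] b) = dist a b := by
    induction n with
    | zero => rfl
    | succ n ih => rw [Function.iterate_succ_apply', Function.iterate_succ_apply', hg.dist_eq, ih]
  intro U hU
  obtain ⟨δ, hδ, hδU⟩ := Metric.mem_uniformity_dist.1 (hh_symm hU)
  filter_upwards [hh (Metric.dist_mem_uniformity hδ)] with xy hxy n
  simp only [hiterate]
  exact hδU (by rwa [hgn])

lemma surjective_of_semiconj_add_of_denseRange_nsmul {X G : Type*} [TopologicalSpace X]
    [CompactSpace X] [Nonempty X] [AddGroup G] [TopologicalSpace G] [T2Space G] [ContinuousAdd G]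
    {f : X → X} {h : X → G} {w : G} (hc : Continuous h) (hs : Function.Semiconj h f (· + w))
    (hw : DenseRange fun n : ℕ => n • w) : Function.Surjective h := by
  obtain ⟨x⟩ := ‹Nonempty X›
  have hdense : DenseRange fun n : ℕ => h x + n • w :=
    (Homeomorph.addLeft (h x)).surjective.denseRange.comp hw (continuous_const_add (h x))
  have hmem : (Set.range fun n : ℕ => h x + n • w) ⊆ Set.range h := by
    rintro _ ⟨n, rfl⟩
    exact ⟨f^[n] x, (hs.iterate_right n x).trans (by simp)⟩
  exact Set.range_eq_univ.1 <|
    (isCompact_range hc).isClosed.closure_eq ▸ (hdense.mono hmem).closure_eq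

/-! ### The covering of the torus by the plane -/

lemma pr2_eq_pr2_iff {a b : R2} : pr2 a = pr2 b ↔ ∃ v : ℤ × ℤ, a = b + intVec v := by
  have hcoe (x y : ℝ) : (x : AddCircle (1 : ℝ)) = y ↔ ∃ k : ℤ, x = y + k := by
    rw [← sub_eq_zero, ← AddCircle.coe_sub, AddCircle.coe_eq_zero_iff]
    simp only [zsmul_eq_mul, mul_one, eq_comm (b := x - y), sub_eq_iff_eq_add']
  simp only [pr2, Prod.ext_iff, hcoe, Prod.exists, intVec, Prod.fst_add, Prod.snd_add,
    exists_and_left, exists_and_right]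

lemma pr2_add_intVec (a : R2) (v : ℤ × ℤ) : pr2 (a + intVec v) = pr2 a :=
  pr2_eq_pr2_iff.2 ⟨v, rfl⟩

lemma pr2_zero : pr2 0 = 0 := rfl

lemma pr2_add (a b : R2) : pr2 (a + b) = pr2 a + pr2 b := rfl

lemma pr2_sub (a b : R2) : pr2 (a - b) = pr2 a - pr2 b := rfl

lemma pr2_nsmul (n : ℕ) (a : R2) : pr2 (n • a) = n • pr2 a := rfl

lemma isOpenQuotientMap_pr2 : IsOpenQuotientMap pr2 :=
  IsOpenQuotientMap.prodMap QuotientAddGroup.isOpenQuotientMap_mk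
    QuotientAddGroup.isOpenQuotientMap_mk

lemma surjective_pr2 : Function.Surjective pr2 := isOpenQuotientMap_pr2.surjective

lemma continuous_pr2 : Continuous pr2 := isOpenQuotientMap_pr2.continuous

lemma exists_add_intVec_mem_Icc (z : R2) : ∃ v : ℤ × ℤ, z + intVec v ∈ Set.Icc (0 : R2) 1 := by
  refine ⟨(-⌊z.1⌋, -⌊z.2⌋), ?_⟩
  have hfract : z + intVec (-⌊z.1⌋, -⌊z.2⌋) = (Int.fract z.1, Int.fract z.2) := by
    simp [intVec, Prod.ext_iff, Int.fract, sub_eq_add_neg]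
  rw [hfract]
  exact ⟨⟨Int.fract_nonneg _, Int.fract_nonneg _⟩,
    ⟨(Int.fract_lt_one _).le, (Int.fract_lt_one _).le⟩⟩

lemma Equivariant.comp {F G : R2 → R2} (hF : Equivariant F) (hG : Equivariant G) :
    Equivariant (F ∘ G) := fun z v => by
  simp only [Function.comp_apply, hG z v, hF (G z) v]

lemma Equivariant.of_tendsto {A : ℕ → R2 → R2} {B : R2 → R2} (hA : ∀ n, Equivariant (A n))
    (h : ∀ z, Tendsto (A · z) atTop (𝓝 (B z))) : Equivariant B := fun z v =>
  tendsto_nhds_unique (h _) (by simpa only [hA _ z v] using (h z).add_const (intVec v))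

lemma IsLift.comp {F G : R2 → R2} {f g : T2 → T2} (hF : IsLift F f) (hG : IsLift G g) :
    IsLift (F ∘ G) (f ∘ g) := fun z => (hF (G z)).trans (congrArg f (hG z))

lemma IsLift.iterate {F : R2 → R2} {f : T2 → T2} (h : IsLift F f) (n : ℕ) :
    IsLift F^[n] f^[n] :=
  Function.Semiconj.iterate_right h n

/-- The torus map induced by a plane map `F`, defined through a section of `pr2`. It is lifted by
`F` as soon as `F` is equivariant. -/
def descend (F : R2 → R2) (x : T2) : T2 := pr2 (F (Function.surjInv surjective_pr2 x))

lemma isLift_descend {F : R2 → R2} (hF : Equivariant F) : IsLift F (descend F) := fun z => by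
  obtain ⟨v, hv⟩ := pr2_eq_pr2_iff.1 (Function.surjInv_eq surjective_pr2 (pr2 z))
  rw [descend, hv, hF, pr2_add_intVec]

lemma IsLift.descend_eq {F : R2 → R2} {f : T2 → T2} (h : IsLift F f) : descend F = f :=
  funext fun x => (h _).trans (congrArg f (Function.surjInv_eq surjective_pr2 x))

lemma continuous_descend {F : R2 → R2} (hF : Equivariant F) (hc : Continuous F) :
    Continuous (descend F) := by
  rw [isOpenQuotientMap_pr2.isQuotientMap.continuous_iff,
    show descend F ∘ pr2 = pr2 ∘ F from funext fun z => (isLift_descend hF z).symm]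
  exact continuous_pr2.comp hc

/-! ### Distances on the torus -/

lemma norm_le_enorm2 (v : R2) : ‖v‖ ≤ enorm2 v :=
  max_le (Real.abs_le_sqrt (le_add_of_nonneg_right (sq_nonneg _)))
    (Real.abs_le_sqrt (le_add_of_nonneg_left (sq_nonneg _)))

lemma enorm2_nonneg (v : R2) : 0 ≤ enorm2 v := Real.sqrt_nonneg _

lemma enorm2_le (v : R2) : enorm2 v ≤ 2 * ‖v‖ := by
  have h1 : v.1 ^ 2 ≤ ‖v‖ ^ 2 := sq_le_sq.2 ((norm_fst_le v).trans (le_abs_self _))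
  have h2 : v.2 ^ 2 ≤ ‖v‖ ^ 2 := sq_le_sq.2 ((norm_snd_le v).trans (le_abs_self _))
  exact Real.sqrt_le_iff.2 ⟨by positivity, by nlinarith⟩

lemma dist_pr2_le (a b : R2) : dist (pr2 a) (pr2 b) ≤ dist a b := by
  have hcoe (r : ℝ) : ‖(r : AddCircle (1 : ℝ))‖ ≤ ‖r‖ := by
    simpa [UnitAddCircle.norm_eq] using round_le r 0
  rw [dist_eq_norm, dist_eq_norm]
  exact max_le_max (hcoe (a - b).1) (hcoe (a - b).2)

lemma exists_pr2_eq_dist_eq (x y : T2) :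
    ∃ a b : R2, pr2 a = x ∧ pr2 b = y ∧ dist a b = dist x y := by
  obtain ⟨b, rfl⟩ := surjective_pr2 y
  obtain ⟨c, hc⟩ := surjective_pr2 (x - pr2 b)
  have hround : pr2 (c + intVec (-round c.1, -round c.2)) = x - pr2 b :=
    (pr2_add_intVec _ _).trans hc
  refine ⟨b + (c + intVec (-round c.1, -round c.2)), b, ?_, rfl, ?_⟩
  · rw [pr2_add, hround, add_sub_cancel]
  · rw [dist_eq_norm, dist_eq_norm, ← hc, add_sub_cancel_left]
    simp [Prod.norm_def, pr2, intVec, UnitAddCircle.norm_eq, sub_eq_add_neg]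

lemma dist_le_distT2 (x y : T2) : dist x y ≤ distT2 x y := by
  obtain ⟨a, b, ha, hb, -⟩ := exists_pr2_eq_dist_eq x y
  refine le_csInf ⟨_, a, b, ha, hb, rfl⟩ ?_
  rintro r ⟨a, b, rfl, rfl, rfl⟩
  exact (dist_pr2_le a b).trans ((dist_eq_norm a b).trans_le (norm_le_enorm2 _))

lemma distT2_le (x y : T2) : distT2 x y ≤ 2 * dist x y := by
  obtain ⟨a, b, ha, hb, hab⟩ := exists_pr2_eq_dist_eq x y
  have hbdd : BddBelow {r | ∃ a b : R2, pr2 a = x ∧ pr2 b = y ∧ r = enorm2 (a - b)} := by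
    refine ⟨0, ?_⟩
    rintro r ⟨a, b, -, -, rfl⟩
    exact enorm2_nonneg _
  exact (csInf_le hbdd ⟨a, b, ha, hb, rfl⟩).trans
    ((enorm2_le _).trans_eq (by rw [← dist_eq_norm, hab]))

lemma normT2_le (u : R2) (v : ℤ × ℤ) : normT2 u ≤ enorm2 (u - intVec v) :=
  ciInf_le ⟨0, by rintro _ ⟨v, rfl⟩; exact enorm2_nonneg _⟩ v

lemma norm_pr2_le_normT2 (u : R2) : ‖pr2 u‖ ≤ normT2 u :=
  le_ciInf fun v => by
    have hv : pr2 u = pr2 (u - intVec v) := pr2_eq_pr2_iff.2 ⟨v, (sub_add_cancel u _).symm⟩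
    simpa [hv, pr2_zero] using (dist_pr2_le (u - intVec v) 0).trans
      ((dist_zero_right _).trans_le (norm_le_enorm2 _))

/-! ### Rotation vectors -/

lemma boundedMeanMotion_of_semiconj {F K : R2 → R2} {ω : R2} {C : ℝ}
    (hs : Function.Semiconj K F (· + ω)) (hK : ∀ z, dist (K z) z ≤ C) :
    BoundedMeanMotion F ω (4 * C) := fun z n => by
  have hn : K (F^[n] z) = K z + (n : ℝ) • ω := by
    rw [hs.iterate_right n z, add_right_iterate_apply, Nat.cast_smul_eq_nsmul]
  have hsplit : F^[n] z - z - (n : ℝ) • ω = (K z - z) - (K (F^[n] z) - F^[n] z) := by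
    rw [hn]
    abel
  calc enorm2 (F^[n] z - z - (n : ℝ) • ω) ≤ 2 * ‖F^[n] z - z - (n : ℝ) • ω‖ := enorm2_le _
    _ ≤ 2 * (C + C) := by
        rw [hsplit]
        gcongr
        refine (norm_sub_le _ _).trans (add_le_add ?_ ?_) <;>
          exact (dist_eq_norm _ _).symm.trans_le (hK _)
    _ = 4 * C := by ring

lemma BoundedMeanMotion.rotSet_eq {F : R2 → R2} {ω : R2} {κ : ℝ}
    (h : BoundedMeanMotion F ω κ) : rotSet F = {ω} := by
  have hlim (z : ℕ → R2) {n : ℕ → ℕ} (hn : Tendsto n atTop atTop) :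
      Tendsto (fun i => (n i : ℝ)⁻¹ • (F^[n i] (z i) - z i)) atTop (𝓝 ω) := by
    have hinv : Tendsto (fun i => (n i : ℝ)⁻¹) atTop (𝓝 0) :=
      tendsto_inv_atTop_zero.comp (tendsto_natCast_atTop_atTop.comp hn)
    rw [tendsto_iff_norm_sub_tendsto_zero]
    refine squeeze_zero' (.of_forall fun _ => norm_nonneg _) ?_ (by simpa using hinv.mul_const κ)
    filter_upwards [hn.eventually_gt_atTop 0] with i hi
    have hi' : (n i : ℝ) ≠ 0 := Nat.cast_ne_zero.2 hi.ne'
    calc ‖(n i : ℝ)⁻¹ • (F^[n i] (z i) - z i) - ω‖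
        = ‖(n i : ℝ)⁻¹ • (F^[n i] (z i) - z i - (n i : ℝ) • ω)‖ := by
          rw [smul_sub _ _ ((n i : ℝ) • ω), inv_smul_smul₀ hi']
      _ = (n i : ℝ)⁻¹ * ‖F^[n i] (z i) - z i - (n i : ℝ) • ω‖ := by
          rw [norm_smul, norm_inv, Real.norm_natCast]
      _ ≤ (n i : ℝ)⁻¹ * κ := by
          gcongr
          exact (norm_le_enorm2 _).trans (h _ _)
  ext v
  refine ⟨fun ⟨z, n, hn, hv⟩ => tendsto_nhds_unique hv (hlim z hn), ?_⟩
  rintro rfl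
  exact ⟨0, id, tendsto_id, hlim 0 tendsto_id⟩

-- The character of `T2` with exponents `d₁, d₂` is trivial on the orbit, hence trivial.
lemma totallyIrrationalVec_of_denseRange {ω : R2} (h : DenseRange fun n : ℕ => n • pr2 ω) :
    TotallyIrrationalVec ω := by
  intro d₁ d₂ e he
  have hω : d₁ • (pr2 ω).1 + d₂ • (pr2 ω).2 = 0 := by
    have hcoe : d₁ • (pr2 ω).1 + d₂ • (pr2 ω).2 =
        ((d₁ * ω.1 + d₂ * ω.2 : ℝ) : AddCircle (1 : ℝ)) := by
      simp [pr2, ← zsmul_eq_mul]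
    rw [hcoe, AddCircle.coe_eq_zero_iff]
    exact ⟨-e, by simp; linarith⟩
  have hχ (x : T2) : d₁ • x.1 + d₂ • x.2 = 0 := by
    refine congrFun (DenseRange.equalizer (g := fun x : T2 => d₁ • x.1 + d₂ • x.2)
      (h := fun _ => 0) h (by fun_prop) continuous_const (funext fun n => ?_)) x
    simp [smul_comm _ n, ← smul_add, hω]
  have hhalf : ((1 / 2 : ℝ) : AddCircle (1 : ℝ)) ≠ 0 := by
    rw [← norm_ne_zero_iff, AddCircle.norm_half_period_eq]
    norm_num
  have hd {d : ℤ} (hd : d • (((1 / 2 : ℝ) / d : ℝ) : AddCircle (1 : ℝ)) = 0) : d = 0 := by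
    by_contra hne
    refine hhalf ?_
    rwa [← AddCircle.coe_zsmul, zsmul_eq_mul,
      mul_div_cancel₀ _ (Int.cast_ne_zero (α := ℝ).2 hne)] at hd
  have hd₁ : d₁ = 0 := hd (by simpa using hχ (_, 0))
  have hd₂ : d₂ = 0 := hd (by simpa using hχ (0, _))
  refine ⟨hd₁, hd₂, ?_⟩
  simpa [hd₁, hd₂] using he

lemma TotallyIrrationalVec.superLiouville {ω : R2} (hω : TotallyIrrationalVec ω)
    (h : ∀ B : ℝ, ∃ᶠ n : ℕ in atTop, normT2 ((n : ℝ) • ω) ≤ Real.exp (-(B * n))) :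
    SuperLiouville ω := by
  intro M
  refine ((h (1 - M)).and_eventually (eventually_gt_atTop 0)).mono fun n ⟨hn, hpos⟩ => ?_
  have : (0 : ℝ) < n := Nat.cast_pos.2 hpos
  -- `Real.log 0 = 0`, so the smallness of `normT2` is of use only when it does not vanish.
  have hne : pr2 ((n : ℝ) • ω) ≠ 0 := fun h0 => by
    obtain ⟨v, hv⟩ := pr2_eq_pr2_iff.1 (h0.trans pr2_zero.symm)
    have hfst : (n : ℝ) * ω.1 = v.1 := by simpa [intVec] using congrArg Prod.fst hv
    exact hpos.ne' (by exact_mod_cast (hω n 0 (-v.1) (by push_cast; linarith)).1)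
  have hlog : Real.log (normT2 ((n : ℝ) • ω)) ≤ -((1 - M) * n) :=
    (Real.log_le_iff_le_exp ((norm_pos_iff.2 hne).trans_le (norm_pr2_le_normT2 _))).2 hn
  calc (n : ℝ)⁻¹ * Real.log (normT2 ((n : ℝ) • ω)) ≤ (n : ℝ)⁻¹ * -((1 - M) * n) := by gcongr
    _ = M - 1 := by field_simp; ring
    _ < M := sub_one_lt M

/-! ### Semi-conjugacies to translations -/

lemma regSemiConj_descend {F K : R2 → R2} {ω : R2} (hF : Equivariant F) (hK : Equivariant K)
    (hKc : Continuous K) (hs : Function.Semiconj K F (· + ω))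
    (hω : DenseRange fun n : ℕ => n • pr2 ω) : RegSemiConj (descend F) (pr2 ω) := by
  have hconj : Function.Semiconj (descend K) (descend F) (· + pr2 ω) := fun x => by
    obtain ⟨z, rfl⟩ := surjective_pr2 x
    rw [← isLift_descend hF, ← isLift_descend hK, ← isLift_descend hK, hs z, pr2_add]
  have hc := continuous_descend hK hKc
  exact ⟨descend K, hc, surjective_of_semiconj_add_of_denseRange_nsmul hc hconj hω,
    ⟨K, hKc, isLift_descend hK, hK⟩, hconj⟩

lemma not_topLinearizable_of_sensitive {f : T2 → T2} {r : ℝ} (hr : 0 < r)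
    (h : ∀ ε > 0, ∃ (x y : T2) (N : ℕ), dist x y < ε ∧ r ≤ dist (f^[N] x) (f^[N] y)) :
    ¬ TopLinearizable f := by
  rintro ⟨w, h', hh', hs⟩
  obtain ⟨δ, hδ, hequi⟩ := Metric.uniformEquicontinuous_iff.1
    (uniformEquicontinuous_iterate_of_semiconj_isometry (hh'.homeomorph h')
      (isometry_add_right w) hs) r hr
  obtain ⟨x, y, N, hxy, hN⟩ := h δ hδ
  exact (hequi x y hxy N).not_ge hN

/-! ### Lifts of area-preserving diffeomorphisms -/

/-- The permutation `g` of the plane is a lift of an area-preserving `C^∞` diffeomorphism of the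
torus isotopic to the identity. -/
structure IsAreaPreservingLift (g : Equiv.Perm R2) : Prop where
  contDiff : ContDiff ℝ (⊤ : ℕ∞) g
  contDiff_inv : ContDiff ℝ (⊤ : ℕ∞) ⇑g⁻¹
  equivariant : Equivariant g
  measurePreserving : MeasurePreserving (descend g) (volume : Measure T2) volume

lemma Equivariant.perm_inv {g : Equiv.Perm R2} (hg : Equivariant g) : Equivariant ⇑g⁻¹ :=
  fun z v => g.injective (by rw [hg]; simp)

lemma descend_perm_inv_descend {g : Equiv.Perm R2} (hg : Equivariant g) (x : T2) :
    descend ⇑g⁻¹ (descend g x) = x := by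
  obtain ⟨z, rfl⟩ := surjective_pr2 x
  rw [← isLift_descend hg, ← isLift_descend hg.perm_inv, Equiv.Perm.inv_def,
    Equiv.symm_apply_apply]

lemma descend_descend_perm_inv {g : Equiv.Perm R2} (hg : Equivariant g) (x : T2) :
    descend g (descend ⇑g⁻¹ x) = x :=
  inv_inv g ▸ descend_perm_inv_descend (g := g⁻¹) hg.perm_inv x

namespace IsAreaPreservingLift

variable {f g : Equiv.Perm R2}

lemma isLift (hg : IsAreaPreservingLift g) : IsLift g (descend g) := isLift_descend hg.equivariant

lemma one : IsAreaPreservingLift 1 where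
  contDiff := contDiff_id
  contDiff_inv := contDiff_id
  equivariant := fun _ _ => rfl
  measurePreserving := IsLift.descend_eq (F := ⇑(1 : Equiv.Perm R2)) (f := id) (fun _ => rfl) ▸
    MeasurePreserving.id _

lemma mul (hf : IsAreaPreservingLift f) (hg : IsAreaPreservingLift g) :
    IsAreaPreservingLift (f * g) where
  contDiff := hf.contDiff.comp hg.contDiff
  contDiff_inv := by
    rw [mul_inv_rev]
    exact hg.contDiff_inv.comp hf.contDiff_inv
  equivariant := hf.equivariant.comp hg.equivariant
  measurePreserving := by
    rw [Equiv.Perm.coe_mul, (hf.isLift.comp hg.isLift).descend_eq]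
    exact hf.measurePreserving.comp hg.measurePreserving

lemma inv (hg : IsAreaPreservingLift g) : IsAreaPreservingLift g⁻¹ where
  contDiff := hg.contDiff_inv
  contDiff_inv := (inv_inv g).symm ▸ hg.contDiff
  equivariant := hg.equivariant.perm_inv
  measurePreserving := by
    have hm : Measurable (descend ⇑g⁻¹) :=
      (continuous_descend hg.equivariant.perm_inv hg.contDiff_inv.continuous).measurable
    have hid : descend ⇑g⁻¹ ∘ descend g = id := funext (descend_perm_inv_descend hg.equivariant)
    refine ⟨hm, ?_⟩
    calc (volume : Measure T2).map (descend ⇑g⁻¹)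
        = ((volume : Measure T2).map (descend g)).map (descend ⇑g⁻¹) := by
          rw [hg.measurePreserving.map_eq]
      _ = volume := by
          rw [Measure.map_map hm hg.measurePreserving.measurable, hid, Measure.map_id]

lemma permCongr_prodComm (hg : IsAreaPreservingLift g) :
    IsAreaPreservingLift ((Equiv.prodComm ℝ ℝ).permCongr g) where
  contDiff := (hg.contDiff.comp (contDiff_snd.prodMk contDiff_fst)).snd.prodMk
    (hg.contDiff.comp (contDiff_snd.prodMk contDiff_fst)).fst
  contDiff_inv := (hg.contDiff_inv.comp (contDiff_snd.prodMk contDiff_fst)).snd.prodMk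
    (hg.contDiff_inv.comp (contDiff_snd.prodMk contDiff_fst)).fst
  equivariant := fun z v => congrArg Prod.swap (hg.equivariant z.swap v.swap)
  measurePreserving := by
    have hlift : IsLift ((Equiv.prodComm ℝ ℝ).permCongr g) (Prod.swap ∘ descend g ∘ Prod.swap) :=
      fun z => congrArg Prod.swap (hg.isLift z.swap)
    have hswap : MeasurePreserving (Prod.swap : T2 → T2) volume volume :=
      Measure.measurePreserving_swap
    exact hlift.descend_eq ▸ hswap.comp (hg.measurePreserving.comp hswap)

lemma isHomeomorph_descend (hg : IsAreaPreservingLift g) : IsHomeomorph (descend g) :=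
  (Homeomorph.mk ⟨descend g, descend ⇑g⁻¹, descend_perm_inv_descend hg.equivariant,
      descend_descend_perm_inv hg.equivariant⟩
    (continuous_descend hg.equivariant hg.contDiff.continuous)
    (continuous_descend hg.equivariant.perm_inv hg.contDiff_inv.continuous)).isHomeomorph

lemma isotopicToId_descend (hg : IsAreaPreservingLift g) : IsotopicToId (descend g) :=
  ⟨hg.isHomeomorph_descend, g,
    (Homeomorph.mk g hg.contDiff.continuous hg.contDiff_inv.continuous).isHomeomorph,
    hg.isLift, hg.equivariant⟩

lemma isCrDiffeo_descend (hg : IsAreaPreservingLift g) : IsCrDiffeo ⊤ (descend g) :=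
  ⟨g, ⇑g⁻¹, hg.isLift, g.left_inv, g.right_inv, hg.contDiff, hg.contDiff_inv⟩

end IsAreaPreservingLift

lemma exists_tendstoUniformly_isAreaPreservingLift {g : ℕ → Equiv.Perm R2} {C : ℝ}
    (hg : ∀ n, IsAreaPreservingLift (g n))
    (h : ∀ n, ∀ k ≤ n, ∀ z, ‖iteratedFDeriv ℝ k (fun z => g (n + 1) z - g n z) z‖ ≤ C / 2 ^ n)
    (h_inv : ∀ n, ∀ k ≤ n, ∀ z,
      ‖iteratedFDeriv ℝ k (fun z => (g (n + 1))⁻¹ z - (g n)⁻¹ z) z‖ ≤ C / 2 ^ n) :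
    ∃ f : Equiv.Perm R2, IsAreaPreservingLift f ∧ TendstoUniformly (fun n => ⇑(g n)) f atTop := by
  obtain ⟨f, hf_smooth, hf⟩ := exists_contDiff_tendstoUniformly (fun n => (hg n).contDiff) h
  obtain ⟨f', hf'_smooth, hf'⟩ :=
    exists_contDiff_tendstoUniformly (fun n => (hg n).contDiff_inv) h_inv
  have hleft (z : R2) : f' (f z) = z := by
    refine tendsto_nhds_unique
      (hf'.tendsto_comp hf'_smooth.continuous.continuousAt (hf.tendsto_at z)) ?_
    simp only [Equiv.Perm.inv_def, Equiv.symm_apply_apply, tendsto_const_nhds]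
  have hright (z : R2) : f (f' z) = z := by
    refine tendsto_nhds_unique
      (hf.tendsto_comp hf_smooth.continuous.continuousAt (hf'.tendsto_at z)) ?_
    simp only [Equiv.Perm.inv_def, Equiv.apply_symm_apply, tendsto_const_nhds]
  have hequiv : Equivariant f := .of_tendsto (fun n => (hg n).equivariant) hf.tendsto_at
  refine ⟨⟨f, f', hleft, hright⟩, ⟨hf_smooth, hf'_smooth, hequiv,
    measurePreserving_of_tendsto (fun n => (hg n).measurePreserving) fun x => ?_⟩, hf⟩
  obtain ⟨z, rfl⟩ := surjective_pr2 x
  simp only [← (hg _).isLift z]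
  exact isLift_descend hequiv z ▸ (continuous_pr2.tendsto _).comp (hf.tendsto_at z)

/-! ### Translations and shears -/

lemma isAreaPreservingLift_addRight (w : R2) : IsAreaPreservingLift (Equiv.addRight w) where
  contDiff := contDiff_id.add contDiff_const
  contDiff_inv := contDiff_id.add contDiff_const
  equivariant := fun z v => add_right_comm z (intVec v) w
  measurePreserving := by
    have : (volume : Measure T2).IsAddRightInvariant :=
      inferInstanceAs ((volume : Measure (AddCircle (1 : ℝ))).prod volume).IsAddRightInvariant
    have hlift : IsLift (Equiv.addRight w) (· + pr2 w) := fun z => pr2_add z w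
    exact hlift.descend_eq ▸ measurePreserving_add_right volume (pr2 w)

/-- The shear `(x, y) ↦ (x, y + φ x)`. -/
def verticalShear (φ : ℝ → ℝ) : Equiv.Perm R2 :=
  Equiv.prodShear (Equiv.refl ℝ) fun x => Equiv.addRight (φ x)

/-- The shear `(x, y) ↦ (x + φ y, y)`. -/
def horizontalShear (φ : ℝ → ℝ) : Equiv.Perm R2 :=
  (Equiv.prodComm ℝ ℝ).permCongr (verticalShear φ)

section Shears

variable {φ : ℝ → ℝ}

lemma verticalShear_apply (z : R2) : verticalShear φ z = (z.1, z.2 + φ z.1) := rfl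

lemma horizontalShear_apply (z : R2) : horizontalShear φ z = (z.1 + φ z.2, z.2) := rfl

lemma isAreaPreservingLift_verticalShear (hφ : ContDiff ℝ (⊤ : ℕ∞) φ)
    (hper : Function.Periodic φ 1) : IsAreaPreservingLift (verticalShear φ) where
  contDiff := contDiff_fst.prodMk (contDiff_snd.add (hφ.comp contDiff_fst))
  contDiff_inv := contDiff_fst.prodMk (contDiff_snd.add (hφ.comp contDiff_fst).neg)
  equivariant := fun z v => by
    have hint : φ (z.1 + v.1) = φ z.1 := by simpa using hper.int_mul v.1 z.1
    simp [verticalShear_apply, intVec, hint, add_right_comm]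
  measurePreserving := by
    have hper' : Function.Periodic (fun x => (φ x : AddCircle (1 : ℝ))) 1 := hper.comp _
    have hcont : Continuous hper'.lift :=
      continuous_coinduced_dom.2 ((AddCircle.continuous_mk' 1).comp hφ.continuous)
    have hlift : IsLift (verticalShear φ) fun x => (x.1, x.2 + hper'.lift x.1) := fun z => rfl
    refine hlift.descend_eq ▸ MeasurePreserving.skew_product (g := fun x y => y + hper'.lift x)
      (MeasurePreserving.id _) ?_ (.of_forall fun x => map_add_right_eq_self _ _)
    exact (continuous_snd.add (hcont.comp continuous_fst)).measurable

lemma isAreaPreservingLift_horizontalShear (hφ : ContDiff ℝ (⊤ : ℕ∞) φ)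
    (hper : Function.Periodic φ 1) : IsAreaPreservingLift (horizontalShear φ) :=
  (isAreaPreservingLift_verticalShear hφ hper).permCongr_prodComm

lemma commute_verticalShear_addRight {u : R2} (hper : Function.Periodic φ u.1) :
    Commute (verticalShear φ) (Equiv.addRight u) :=
  Equiv.ext fun z => by
    simp [verticalShear_apply, Prod.ext_iff, hper z.1, add_right_comm]

lemma commute_horizontalShear_addRight {u : R2} (hper : Function.Periodic φ u.2) :
    Commute (horizontalShear φ) (Equiv.addRight u) :=
  Equiv.ext fun z => by
    simp [horizontalShear_apply, Prod.ext_iff, hper z.2, add_right_comm]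

lemma odd_verticalShear (hφ : Function.Odd φ) : Function.Odd (verticalShear φ) := fun z => by
  simp [verticalShear_apply, hφ z.1, add_comm]

lemma odd_horizontalShear (hφ : Function.Odd φ) : Function.Odd (horizontalShear φ) := fun z => by
  simp [horizontalShear_apply, hφ z.2, add_comm]

lemma dist_verticalShear_self {a : ℝ} (h : ∀ x, |φ x| ≤ a) (z : R2) :
    dist (verticalShear φ z) z ≤ a := by
  simpa [verticalShear_apply, Prod.dist_eq, (abs_nonneg (φ z.1)).trans (h z.1)] using h z.1

lemma dist_horizontalShear_self {a : ℝ} (h : ∀ x, |φ x| ≤ a) (z : R2) :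
    dist (horizontalShear φ z) z ≤ a := by
  simpa [horizontalShear_apply, Prod.dist_eq, (abs_nonneg (φ z.2)).trans (h z.2)] using h z.2

end Shears

/-- The conjugate by `H` of the translation by `u`. -/
def conjTranslation (H : Equiv.Perm R2) (u : R2) : Equiv.Perm R2 := H * Equiv.addRight u * H⁻¹

section ConjTranslation

variable (H : Equiv.Perm R2) (u : R2)

lemma conjTranslation_apply (z : R2) : conjTranslation H u z = H (H⁻¹ z + u) := rfl

lemma conjTranslation_inv : (conjTranslation H u)⁻¹ = conjTranslation H (-u) :=
  Equiv.ext fun _ => rfl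

lemma conjTranslation_iterate (N : ℕ) : (conjTranslation H u)^[N] = conjTranslation H (N • u) := by
  have hpow : (Equiv.addRight u : Equiv.Perm R2) ^ N = Equiv.addRight (N • u) := by
    simp
  rw [Equiv.Perm.iterate_eq_pow, conjTranslation, conj_pow, hpow, conjTranslation]

variable {H u}

lemma conjTranslation_mul_of_commute {g : Equiv.Perm R2} (h : Commute g (Equiv.addRight u)) :
    conjTranslation (H * g) u = conjTranslation H u := by
  simp only [conjTranslation, mul_inv_rev, ← mul_assoc]
  rw [mul_assoc H g, h.eq, ← mul_assoc, mul_inv_cancel_right]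

lemma IsAreaPreservingLift.conjTranslation (hH : IsAreaPreservingLift H) :
    IsAreaPreservingLift (conjTranslation H u) :=
  (hH.mul (isAreaPreservingLift_addRight u)).mul hH.inv

end ConjTranslation

/-! ### Rational translations and twists -/

/-- The sine wave of amplitude `a` and frequency `n`. -/
def sineWave (a : ℝ) (n : ℕ) (x : ℝ) : ℝ := a * Real.sin (n * x * (2 * Real.pi))

section SineWave

variable (a : ℝ) (n : ℕ)

lemma contDiff_sineWave : ContDiff ℝ (⊤ : ℕ∞) (sineWave a n) :=
  contDiff_const.mul
    (Real.contDiff_sin.comp ((contDiff_const.mul contDiff_id).mul contDiff_const))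

lemma odd_sineWave : Function.Odd (sineWave a n) := fun x => by
  simp [sineWave]

lemma abs_sineWave_le (x : ℝ) : |sineWave a n x| ≤ |a| := by
  rw [sineWave, abs_mul]
  exact mul_le_of_le_one_right (abs_nonneg a) (Real.abs_sin_le_one _)

variable {n}

lemma periodic_sineWave {c : ℝ} (hc : ∃ j : ℤ, n * c = j) :
    Function.Periodic (sineWave a n) c := fun x => by
  obtain ⟨j, hj⟩ := hc
  rw [sineWave, mul_add, hj, add_mul, Real.sin_add_int_mul_two_pi, sineWave]

lemma sineWave_one_div_four_mul (hn : n ≠ 0) : sineWave a n (1 / (4 * n)) = a := by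
  have h : n * (1 / (4 * n)) * (2 * Real.pi) = Real.pi / 2 := by
    field_simp
    norm_num
  rw [sineWave, h, Real.sin_pi_div_two, mul_one]

lemma sineWave_one_div_two_mul (hn : n ≠ 0) : sineWave a n (1 / (2 * n)) = 0 := by
  have h : n * (1 / (2 * n)) * (2 * Real.pi) = Real.pi := by
    field_simp
  rw [sineWave, h, Real.sin_pi, mul_zero]

end SineWave

/-- The group `(1/q)ℤ²` of translation vectors with denominator `q`. -/
def rationalLattice (q : ℕ) : AddSubgroup R2 where
  carrier := {u | ∃ v, (q : ℝ) • u = intVec v}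
  zero_mem' := ⟨0, by simp [intVec, Prod.ext_iff]⟩
  add_mem' := by
    rintro a b ⟨v, hv⟩ ⟨v', hv'⟩
    exact ⟨v + v', by rw [smul_add, hv, hv']; simp [intVec]⟩
  neg_mem' := by
    rintro a ⟨v, hv⟩
    exact ⟨-v, by rw [smul_neg, hv]; simp [intVec]⟩

lemma rationalLattice_le_mul_right (q k : ℕ) : rationalLattice q ≤ rationalLattice (q * k) := by
  rintro u ⟨v, hv⟩
  refine ⟨(k : ℤ) • v, ?_⟩
  rw [Nat.cast_mul, mul_comm, mul_smul, hv]
  simp [intVec]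

/-- A horizontal shear of amplitude `1/(4Q)` followed by a vertical shear of amplitude `1/(4q)`,
both of period `1/Q`. -/
def twist (q Q : ℕ) : Equiv.Perm R2 :=
  verticalShear (sineWave (1 / (4 * q)) Q) * horizontalShear (sineWave (1 / (4 * Q)) Q)

section Twist

variable (q Q : ℕ)

lemma isAreaPreservingLift_twist : IsAreaPreservingLift (twist q Q) :=
  (isAreaPreservingLift_verticalShear (contDiff_sineWave _ _)
      (periodic_sineWave _ ⟨Q, by simp⟩)).mul
    (isAreaPreservingLift_horizontalShear (contDiff_sineWave _ _)
      (periodic_sineWave _ ⟨Q, by simp⟩))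

lemma odd_twist : Function.Odd (twist q Q) := fun z => by
  simp only [twist, Equiv.Perm.mul_apply, odd_horizontalShear (odd_sineWave _ _) z,
    odd_verticalShear (odd_sineWave _ _) _]

variable {q Q}

lemma commute_twist_addRight {u : R2} (hu : u ∈ rationalLattice Q) :
    Commute (twist q Q) (Equiv.addRight u) := by
  obtain ⟨v, hv⟩ := hu
  exact (commute_verticalShear_addRight (periodic_sineWave _ ⟨v.1, congrArg Prod.fst hv⟩)).mul_left
    (commute_horizontalShear_addRight (periodic_sineWave _ ⟨v.2, congrArg Prod.snd hv⟩))

lemma twist_one_div_four_mul (hQ : Q ≠ 0) :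
    twist q Q (0, 1 / (4 * Q : ℝ)) = (1 / (4 * Q : ℝ), 1 / (4 * Q : ℝ) + 1 / (4 * q : ℝ)) := by
  simp only [twist, Equiv.Perm.mul_apply, horizontalShear_apply, verticalShear_apply, zero_add,
    sineWave_one_div_four_mul _ hQ]

lemma twist_one_div_two_mul (hQ : Q ≠ 0) :
    twist q Q (0, 1 / (2 * Q : ℝ)) = (0, 1 / (2 * Q : ℝ)) := by
  simp only [twist, Equiv.Perm.mul_apply, horizontalShear_apply, verticalShear_apply,
    sineWave_one_div_two_mul _ hQ, (odd_sineWave _ _).map_zero, add_zero]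

lemma dist_twist_inv_self (hq : 0 < q) (hqQ : q ≤ Q) (z : R2) :
    dist ((twist q Q)⁻¹ z) z ≤ 1 / q := by
  have : (0 : ℝ) < q := by exact_mod_cast hq
  have hqQ' : (q : ℝ) ≤ Q := by exact_mod_cast hqQ
  have hQ : (1 : ℝ) / (4 * Q) ≤ 1 / (4 * q) := by gcongr
  have hv := dist_verticalShear_self (abs_sineWave_le (1 / (4 * q)) Q)
  have hh := dist_horizontalShear_self (abs_sineWave_le (1 / (4 * Q)) Q)
  rw [abs_of_nonneg (by positivity)] at hv hh
  have hdist (y : R2) : dist (twist q Q y) y ≤ 1 / q :=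
    calc dist (twist q Q y) y ≤ 1 / (4 * q) + 1 / (4 * Q) :=
          (dist_triangle _ _ _).trans (add_le_add (hv _) (hh y))
      _ ≤ 1 / (4 * q) + 1 / (4 * q) := by gcongr
      _ ≤ 1 / q := by
        have : (0 : ℝ) < 1 / q := by positivity
        rw [one_div, mul_inv, ← one_div (q : ℝ)]
        linarith
  simpa [dist_comm] using hdist ((twist q Q)⁻¹ z)

end Twist

lemma exists_int_dist_grid_le {m : ℕ} (hm : 0 < m) (τ : R2) :
    ∃ (j : ℤ) (v : ℤ × ℤ), dist ((j : ℝ) / m, (j : ℝ) / m ^ 2) (τ + intVec v) ≤ 1 / m := by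
  have hm' : (0 : ℝ) < m := by exact_mod_cast hm
  set a : ℤ := ⌊m * τ.2⌋
  set b : ℤ := ⌊m * τ.1⌋
  have hb : ((b % m : ℤ) : ℝ) = b - m * (b / m : ℤ) := by
    rw [Int.emod_def]
    push_cast
    ring
  have hb_nonneg : (0 : ℝ) ≤ (b % m : ℤ) := by exact_mod_cast Int.emod_nonneg b (by omega)
  have hb_lt : ((b % m : ℤ) : ℝ) < m := by exact_mod_cast Int.emod_lt_of_pos b (by omega)
  refine ⟨m * a + b % m, (a - b / m, 0), ?_⟩
  rw [Prod.dist_eq, max_le_iff, Real.dist_eq, Real.dist_eq]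
  constructor
  · have hfst : ((m * a + b % m : ℤ) : ℝ) / m - (τ + intVec (a - b / m, 0)).1 =
        (b - m * τ.1) / m := by
      simp only [intVec, Prod.fst_add, Int.cast_add, Int.cast_sub, Int.cast_mul, Int.cast_natCast,
        hb]
      field_simp
      ring
    rw [hfst, abs_div, abs_of_pos hm']
    gcongr
    rw [abs_le]
    constructor <;> linarith [Int.floor_le (m * τ.1), Int.lt_floor_add_one (m * τ.1)]
  · have hsnd : ((m * a + b % m : ℤ) : ℝ) / m ^ 2 - (τ + intVec (a - b / m, 0)).2 =
        (a - m * τ.2 + (b % m : ℤ) / m) / m := by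
      simp only [intVec, Prod.snd_add, Int.cast_add, Int.cast_mul, Int.cast_natCast, Int.cast_zero]
      field_simp
      ring
    have h0 : (0 : ℝ) ≤ (b % m : ℤ) / m := by positivity
    have h1 : ((b % m : ℤ) : ℝ) / m ≤ 1 := (div_le_one hm').2 hb_lt.le
    rw [hsnd, abs_div, abs_of_pos hm']
    gcongr
    rw [abs_le]
    constructor <;> linarith [Int.floor_le (m * τ.2), Int.lt_floor_add_one (m * τ.2)]

lemma exists_nat_dist_grid_le {m : ℕ} (hm : 0 < m) (τ : R2) :
    ∃ J : ℕ, 0 < J ∧ J ≤ m ^ 2 ∧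
      ∃ v : ℤ × ℤ, dist ((J : ℝ) / m, (J : ℝ) / m ^ 2) (τ + intVec v) ≤ 1 / m := by
  obtain ⟨j, v, hjv⟩ := exists_int_dist_grid_le hm τ
  have hm2 : (0 : ℤ) < (m : ℤ) ^ 2 := by positivity
  obtain ⟨J, hJ⟩ := Int.eq_ofNat_of_zero_le (Int.emod_nonneg (j - 1) hm2.ne')
  have hJ_lt := Int.emod_lt_of_pos (j - 1) hm2
  set c : ℤ := (j - 1) / (m : ℤ) ^ 2
  have hjc : (j : ℝ) = (J + 1 : ℕ) + m ^ 2 * c := by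
    have := Int.emod_add_mul_ediv (j - 1) ((m : ℤ) ^ 2)
    rw [hJ] at this
    have hj : j = (J + 1 : ℕ) + (m : ℤ) ^ 2 * c := by push_cast; linarith
    exact_mod_cast hj
  refine ⟨J + 1, J.succ_pos, by rw [hJ] at hJ_lt; exact_mod_cast hJ_lt, v - (m * c, c), ?_⟩
  have hm' : (m : ℝ) ≠ 0 := by exact_mod_cast hm.ne'
  have hfst : (j : ℝ) / m = (J + 1 : ℕ) / m + (m * c : ℤ) := by
    rw [hjc]; push_cast; field_simp
  have hsnd : (j : ℝ) / m ^ 2 = (J + 1 : ℕ) / m ^ 2 + (c : ℤ) := by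
    rw [hjc]; field_simp
  convert hjv using 1
  simp only [Prod.dist_eq, Real.dist_eq, intVec, Prod.fst_add, Prod.snd_add, Prod.fst_sub,
    Prod.snd_sub, Int.cast_sub, hfst, hsnd]
  congr 2 <;> ring

/-! ### Stages of the construction -/

lemma Equivariant.uniformContinuous {F : R2 → R2} (hF : Equivariant F) (hc : Continuous F) :
    UniformContinuous F := by
  have hΦ : ContDiff ℝ 0 fun p : R2 × R2 => F (p.2 + p.1) - F p.2 :=
    contDiff_zero.2 (by fun_prop)
  rw [Metric.uniformContinuous_iff]
  intro ε hε
  have h := eventually_forall_norm_iteratedFDeriv_le_of_periodic hΦ le_rfl (p₀ := 0)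
    (fun z => by simp) isCompact_Icc (fun z => (exists_add_intVec_mem_Icc z).imp' intVec
      fun v hv => ⟨hv, fun p x => by rw [add_right_comm, hF, hF, add_sub_add_right_eq_sub]⟩)
    (half_pos hε)
  obtain ⟨δ, hδ, hδ'⟩ := Metric.eventually_nhds_iff.1 h
  refine ⟨δ, hδ, fun {a b} hab => ?_⟩
  have hdist := hδ' (y := a - b) (by simpa [dist_eq_norm] using hab) b
  rw [norm_iteratedFDeriv_zero, add_sub_cancel, ← dist_eq_norm] at hdist
  exact hdist.trans_lt (half_lt_self hε)

/-- The size of the changes allowed at the `n`-th stage. -/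
def tolerance (n : ℕ) : ℝ := 1 / 100 / 2 ^ n

lemma tolerance_pos (n : ℕ) : 0 < tolerance n := by
  unfold tolerance
  positivity

lemma tolerance_le (n : ℕ) : tolerance n ≤ 1 / 100 :=
  div_le_self (by norm_num) (one_le_pow₀ one_le_two)

lemma two_mul_tolerance_succ (n : ℕ) : 2 * tolerance (n + 1) = tolerance n := by
  rw [tolerance, tolerance, pow_succ]
  ring

lemma tendsto_tolerance : Tendsto tolerance atTop (𝓝 0) :=
  (tendsto_pow_atTop_atTop_of_one_lt one_lt_two).const_div_atTop _

/-- A stage of the construction: the conjugacy `conj`, commuting with the central symmetry, and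
the rational translation vector `rot`, of denominator `denom`. The approximation of the
pseudo-rotation is `conjTranslation conj rot`. -/
structure Stage where
  denom : ℕ
  conj : Equiv.Perm R2
  rot : R2
  denom_pos : 0 < denom
  isAreaPreservingLift : IsAreaPreservingLift conj
  odd : Function.Odd conj
  rot_mem : rot ∈ rationalLattice denom

namespace Stage

/-- The identity, as a conjugate of the zero translation by the identity. -/
def initial : Stage where
  denom := 1
  conj := 1
  rot := 0
  denom_pos := one_pos
  isAreaPreservingLift := .one
  odd := fun _ => rfl
  rot_mem := zero_mem _

variable (s : Stage) (m : ℕ)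

/-- The change of the translation vector from `s` to the next stage of parameter `m`. Its multiples
run through a `1/m`-dense set of the torus. -/
def increment : R2 := (1 / (s.denom * m : ℝ), 1 / (s.denom * m ^ 2 : ℝ))

lemma increment_mem : s.increment m ∈ rationalLattice (s.denom * m ^ 2) := by
  have hq : (s.denom : ℝ) ≠ 0 := by exact_mod_cast s.denom_pos.ne'
  rcases eq_or_ne m 0 with rfl | hm
  · exact ⟨0, by simp [increment, intVec, Prod.ext_iff]⟩
  · exact ⟨(m, 1), by ext <;> simp [increment, intVec] <;> field_simp⟩

variable {m}

/-- The stage with denominator `s.denom * m ^ 2` following `s`. -/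
def next (hm : 0 < m) : Stage where
  denom := s.denom * m ^ 2
  conj := s.conj * twist s.denom (s.denom * m ^ 2)
  rot := s.rot + s.increment m
  denom_pos := Nat.mul_pos s.denom_pos (pow_pos hm 2)
  isAreaPreservingLift := s.isAreaPreservingLift.mul (isAreaPreservingLift_twist _ _)
  odd := fun z => by simp only [Equiv.Perm.mul_apply, odd_twist _ _ z, s.odd _]
  rot_mem := add_mem (rationalLattice_le_mul_right _ _ s.rot_mem) (s.increment_mem m)

variable {s}

lemma conjTranslation_next (hm : 0 < m) {u : R2} (hu : u ∈ rationalLattice (s.next hm).denom) :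
    conjTranslation (s.next hm).conj u = conjTranslation s.conj u :=
  conjTranslation_mul_of_commute (commute_twist_addRight hu)

lemma dist_next_conj_inv_le (hm : 0 < m) (z : R2) :
    dist ((s.next hm).conj⁻¹ z) (s.conj⁻¹ z) ≤ 1 / s.denom := by
  simpa only [next, mul_inv_rev, Equiv.Perm.mul_apply] using
    dist_twist_inv_self s.denom_pos (Nat.le_mul_of_pos_right _ (pow_pos hm 2)) _

lemma exists_dist_nsmul_next_rot_le (hm : 0 < m) (τ : R2) :
    ∃ N, 0 < N ∧ N ≤ (s.next hm).denom ∧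
      ∃ v : ℤ × ℤ, dist (N • (s.next hm).rot) (τ + intVec v) ≤ 1 / m := by
  obtain ⟨J, hJ, hJm, v, hv⟩ := exists_nat_dist_grid_le hm τ
  obtain ⟨p, hp⟩ := s.rot_mem
  have hq : (s.denom : ℝ) ≠ 0 := by exact_mod_cast s.denom_pos.ne'
  refine ⟨s.denom * J, Nat.mul_pos s.denom_pos hJ, Nat.mul_le_mul_left _ hJm, v + J • p, ?_⟩
  have hrot : (s.denom * J) • s.rot = intVec (J • p) := by
    rw [mul_comm, mul_smul, ← Nat.cast_smul_eq_nsmul ℝ s.denom, hp]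
    simp [intVec]
  have hinc : (s.denom * J) • s.increment m = ((J : ℝ) / m, (J : ℝ) / m ^ 2) := by
    ext <;> simp [increment] <;> field_simp
  have hv' : intVec (v + J • p) = intVec v + intVec (J • p) := by simp [intVec]
  rwa [next, smul_add, hrot, hinc, hv', add_comm (intVec (J • p)), ← add_assoc, dist_add_right]

lemma norm_increment_le (hm : 0 < m) : ‖s.increment m‖ ≤ 1 / m := by
  have hq : (1 : ℝ) ≤ s.denom := by exact_mod_cast s.denom_pos
  have hm' : (1 : ℝ) ≤ m := by exact_mod_cast hm
  have h1 : (m : ℝ) ≤ s.denom * m := le_mul_of_one_le_left (by positivity) hq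
  have h2 : (m : ℝ) ≤ s.denom * m ^ 2 :=
    h1.trans (mul_le_mul_of_nonneg_left (le_self_pow₀ hm' two_ne_zero) (by positivity))
  rw [Prod.norm_def, max_le_iff, increment, Real.norm_of_nonneg (by positivity),
    Real.norm_of_nonneg (by positivity)]
  exact ⟨one_div_le_one_div_of_le (by positivity) h1, one_div_le_one_div_of_le (by positivity) h2⟩

lemma tendsto_increment : Tendsto s.increment atTop (𝓝 0) :=
  squeeze_zero_norm' ((eventually_gt_atTop 0).mono fun _ => norm_increment_le)
    tendsto_one_div_atTop_nhds_zero_nat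

/-- The requirements on the parameter `m` chosen after the `n`-th stage `s`. -/
structure Admissible (n : ℕ) (s : Stage) (m : ℕ) : Prop where
  two_pow_le : 2 ^ (n + 1) ≤ m
  norm_iteratedFDeriv_le : ∀ k ≤ n, ∀ z, ‖iteratedFDeriv ℝ k (fun z =>
    conjTranslation s.conj (s.rot + s.increment m) z - conjTranslation s.conj s.rot z) z‖ ≤
      tolerance n
  norm_iteratedFDeriv_inv_le : ∀ k ≤ n, ∀ z, ‖iteratedFDeriv ℝ k (fun z =>
    conjTranslation s.conj (-(s.rot + s.increment m)) z - conjTranslation s.conj (-s.rot) z) z‖ ≤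
      tolerance n
  dist_conjTranslation_nsmul_le : ∀ N ≤ s.denom, ∀ z,
    dist (conjTranslation s.conj (N • (s.rot + s.increment m)) z)
      (conjTranslation s.conj (N • s.rot) z) ≤ tolerance n
  dist_conj_le : ∀ a b, dist a b ≤ 1 / m → dist (s.conj a) (s.conj b) ≤ tolerance n
  exp_mul_norm_increment_le :
    Real.exp (n * s.denom) * s.denom * ‖s.increment m‖ ≤ tolerance n

lemma eventually_norm_iteratedFDeriv_conjTranslation_sub_le (s : Stage) (u : R2) (n : ℕ) {ε : ℝ}
    (hε : 0 < ε) : ∀ᶠ t in 𝓝 (0 : R2), ∀ k ≤ n, ∀ z, ‖iteratedFDeriv ℝ k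
      (fun z => conjTranslation s.conj (u + t) z - conjTranslation s.conj u z) z‖ ≤ ε := by
  have hs := s.isAreaPreservingLift
  have hΦ : ContDiff ℝ (⊤ : ℕ∞) fun p : R2 × R2 =>
      conjTranslation s.conj (u + p.1) p.2 - conjTranslation s.conj u p.2 :=
    (hs.contDiff.comp ((hs.contDiff_inv.comp contDiff_snd).add
      (contDiff_const.add contDiff_fst))).sub (hs.conjTranslation.contDiff.comp contDiff_snd)
  have hk (k : ℕ) : ∀ᶠ t in 𝓝 (0 : R2), ∀ z, ‖iteratedFDeriv ℝ k
      (fun z => conjTranslation s.conj (u + t) z - conjTranslation s.conj u z) z‖ ≤ ε :=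
    eventually_forall_norm_iteratedFDeriv_le_of_periodic hΦ (mod_cast le_top)
      (fun z => by simp) isCompact_Icc (fun z => (exists_add_intVec_mem_Icc z).imp' intVec
        fun v hv => ⟨hv, fun p x => by
          rw [hs.conjTranslation.equivariant, hs.conjTranslation.equivariant,
            add_sub_add_right_eq_sub]⟩) hε
  exact (Set.finite_Iic n).eventually_all.2 fun k _ => hk k

lemma eventually_dist_conjTranslation_nsmul_le (s : Stage) (u : R2) (q : ℕ) {ε : ℝ}
    (hε : 0 < ε) : ∀ᶠ t in 𝓝 (0 : R2), ∀ N ≤ q, ∀ z,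
      dist (conjTranslation s.conj (N • (u + t)) z) (conjTranslation s.conj (N • u) z) ≤ ε := by
  have hs := s.isAreaPreservingLift
  obtain ⟨δ, hδ, hδε⟩ := Metric.uniformContinuous_iff.1
    (hs.equivariant.uniformContinuous hs.contDiff.continuous) ε hε
  have hN (N : ℕ) : ∀ᶠ t in 𝓝 (0 : R2), ∀ z,
      dist (conjTranslation s.conj (N • (u + t)) z) (conjTranslation s.conj (N • u) z) ≤ ε := by
    have htend : Tendsto (fun t : R2 => ‖N • t‖) (𝓝 0) (𝓝 0) :=
      Continuous.tendsto' (by fun_prop) _ _ (by simp)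
    filter_upwards [htend.eventually_lt_const hδ] with t ht z
    refine (hδε ?_).le
    simpa [dist_eq_norm, smul_add] using ht
  exact (Set.finite_Iic q).eventually_all.2 fun N _ => hN N

lemma eventually_dist_conj_le (s : Stage) {ε : ℝ} (hε : 0 < ε) :
    ∀ᶠ m : ℕ in atTop, ∀ a b, dist a b ≤ 1 / m → dist (s.conj a) (s.conj b) ≤ ε := by
  obtain ⟨δ, hδ, hδε⟩ := Metric.uniformContinuous_iff.1
    (s.isAreaPreservingLift.equivariant.uniformContinuous
      s.isAreaPreservingLift.contDiff.continuous) ε hε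
  filter_upwards [tendsto_one_div_atTop_nhds_zero_nat.eventually_lt_const hδ] with m hm a b hab
  exact (hδε (hab.trans_lt hm)).le

lemma exists_admissible (n : ℕ) (s : Stage) : ∃ m, Admissible n s m := by
  have hinc := s.tendsto_increment
  have hexp : Tendsto (fun m => Real.exp (n * s.denom) * s.denom * ‖s.increment m‖) atTop
      (𝓝 0) := by
    simpa using hinc.norm.const_mul (Real.exp (n * s.denom) * s.denom)
  obtain ⟨m, h⟩ := ((eventually_ge_atTop (2 ^ (n + 1))).and <|
    (hinc.eventually (s.eventually_norm_iteratedFDeriv_conjTranslation_sub_le s.rot n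
      (tolerance_pos n))).and <|
    ((neg_zero (G := R2) ▸ hinc.neg).eventually
      (s.eventually_norm_iteratedFDeriv_conjTranslation_sub_le (-s.rot) n (tolerance_pos n))).and <|
    (hinc.eventually (s.eventually_dist_conjTranslation_nsmul_le s.rot s.denom
      (tolerance_pos n))).and <|
    (s.eventually_dist_conj_le (tolerance_pos n)).and
    (hexp.eventually_le_const (tolerance_pos n))).exists
  obtain ⟨h_two_pow, h_deriv, h_deriv_inv, h_iterate, h_conj, h_exp⟩ := h
  exact ⟨m, h_two_pow, h_deriv, by simpa only [neg_add] using h_deriv_inv, h_iterate, h_conj, h_exp⟩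

/-- The point `(0, 1/(4q))` for the denominator `q`. It tends to the origin as the stages progress,
while its image under the conjugacy remains close to `(0, 1/4)`. -/
def markedPoint (s : Stage) : R2 := (0, 1 / (4 * s.denom : ℝ))

lemma two_nsmul_markedPoint (s : Stage) : 2 • s.markedPoint = (0, 1 / (2 * s.denom : ℝ)) := by
  have h : 2 * (1 / (4 * s.denom : ℝ)) = 1 / (2 * s.denom) := by
    rw [one_div, one_div, mul_inv, mul_inv]
    ring
  simpa [markedPoint, Prod.ext_iff] using h

lemma conj_zero (s : Stage) : s.conj 0 = 0 := s.odd.map_zero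

namespace Admissible

variable {n : ℕ} {s : Stage} {m : ℕ}

lemma pos (h : Admissible n s m) : 0 < m := (pow_pos two_pos _).trans_le h.two_pow_le

lemma one_div_mul_next_denom_le (h : Admissible n s m) {c : ℝ} (hc : 1 ≤ c) :
    1 / (c * (s.next h.pos).denom) ≤ 1 / m := by
  have hle : m ≤ (s.next h.pos).denom :=
    (Nat.le_self_pow two_ne_zero m).trans (Nat.le_mul_of_pos_left _ s.denom_pos)
  refine one_div_le_one_div_of_le (by exact_mod_cast h.pos) ?_
  calc (m : ℝ) ≤ (s.next h.pos).denom := by exact_mod_cast hle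
    _ ≤ c * (s.next h.pos).denom := le_mul_of_one_le_left (Nat.cast_nonneg _) hc

lemma dist_next_conj_markedPoint_le (h : Admissible n s m) :
    dist ((s.next h.pos).conj (s.next h.pos).markedPoint) (s.conj s.markedPoint) ≤
      tolerance n := by
  have hnext : (s.next h.pos).conj (s.next h.pos).markedPoint =
      s.conj (1 / (4 * (s.next h.pos).denom : ℝ),
        1 / (4 * (s.next h.pos).denom : ℝ) + 1 / (4 * s.denom : ℝ)) :=
    congrArg s.conj (twist_one_div_four_mul (s.next h.pos).denom_pos.ne')
  have hle := h.one_div_mul_next_denom_le (c := 4) (by norm_num)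
  rw [hnext]
  refine h.dist_conj_le _ _ ?_
  simpa [Prod.dist_eq, markedPoint] using hle

lemma norm_next_conj_two_nsmul_markedPoint_le (h : Admissible n s m) :
    ‖(s.next h.pos).conj (2 • (s.next h.pos).markedPoint)‖ ≤ tolerance n := by
  have hnext : (s.next h.pos).conj (0, 1 / (2 * (s.next h.pos).denom : ℝ)) =
      s.conj (0, 1 / (2 * (s.next h.pos).denom : ℝ)) :=
    congrArg s.conj (twist_one_div_two_mul (s.next h.pos).denom_pos.ne')
  have hle := h.one_div_mul_next_denom_le (c := 2) one_le_two
  rw [two_nsmul_markedPoint, hnext, ← dist_zero_right, ← s.conj_zero]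
  refine h.dist_conj_le _ _ ?_
  simpa [Prod.dist_eq] using hle

end Admissible

end Stage

/-! ### The limit of the approximations -/

/-- A sequence of stages, starting from the identity, together with the admissible parameters
leading from each stage to the following one. -/
structure ConjugationScheme where
  stage : ℕ → Stage
  param : ℕ → ℕ
  admissible : ∀ n, Stage.Admissible n (stage n) (param n)
  stage_zero : stage 0 = Stage.initial
  stage_succ : ∀ n, stage (n + 1) = (stage n).next (admissible n).pos

namespace ConjugationScheme

instance : Nonempty ConjugationScheme := by
  choose param hparam using Stage.exists_admissible
  let stage : ℕ → Stage := fun n => n.rec .initial fun n s => s.next (hparam n s).pos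
  exact ⟨⟨stage, fun n => param n (stage n), fun n => hparam n (stage n), rfl, fun _ => rfl⟩⟩

variable (S : ConjugationScheme)

lemma denom_zero : (S.stage 0).denom = 1 := by rw [S.stage_zero, Stage.initial]

lemma conj_zero : (S.stage 0).conj = 1 := by rw [S.stage_zero, Stage.initial]

lemma two_mul_denom_le_denom_succ (n : ℕ) : 2 * (S.stage n).denom ≤ (S.stage (n + 1)).denom := by
  have hm : 2 ≤ S.param n ^ 2 :=
    calc 2 ≤ 2 ^ (n + 1) := Nat.le_self_pow n.succ_ne_zero 2
      _ ≤ S.param n := (S.admissible n).two_pow_le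
      _ ≤ S.param n ^ 2 := Nat.le_self_pow two_ne_zero _
  rw [S.stage_succ, mul_comm]
  exact Nat.mul_le_mul_left _ hm

lemma monotone_denom : Monotone fun n => (S.stage n).denom :=
  monotone_nat_of_le_succ fun n =>
    (Nat.le_mul_of_pos_left _ two_pos).trans (S.two_mul_denom_le_denom_succ n)

lemma two_pow_le_denom (n : ℕ) : 2 ^ n ≤ (S.stage n).denom := by
  induction n with
  | zero => exact S.denom_zero.ge
  | succ n ih =>
    rw [pow_succ']
    exact (Nat.mul_le_mul_left 2 ih).trans (S.two_mul_denom_le_denom_succ n)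

lemma rot_succ (n : ℕ) :
    (S.stage (n + 1)).rot = (S.stage n).rot + (S.stage n).increment (S.param n) := by
  rw [S.stage_succ, Stage.next]

lemma conjTranslation_succ {n : ℕ} {u : R2} (hu : u ∈ rationalLattice (S.stage (n + 1)).denom) :
    conjTranslation (S.stage (n + 1)).conj u = conjTranslation (S.stage n).conj u := by
  rw [S.stage_succ] at hu ⊢
  exact Stage.conjTranslation_next _ hu

/-- The conjugate of a rational translation attached to the `n`-th stage. -/
def approx (n : ℕ) : Equiv.Perm R2 := conjTranslation (S.stage n).conj (S.stage n).rot

lemma approx_iterate (n N : ℕ) :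
    (S.approx n)^[N] = conjTranslation (S.stage n).conj (N • (S.stage n).rot) :=
  conjTranslation_iterate _ _ _

lemma approx_succ_iterate (n N : ℕ) :
    (S.approx (n + 1))^[N] = conjTranslation (S.stage n).conj (N • (S.stage (n + 1)).rot) := by
  rw [approx_iterate, S.conjTranslation_succ (nsmul_mem (S.stage (n + 1)).rot_mem N)]

lemma exists_limit : ∃ F : Equiv.Perm R2,
    IsAreaPreservingLift F ∧ TendstoUniformly (fun n => ⇑(S.approx n)) F atTop := by
  refine exists_tendstoUniformly_isAreaPreservingLift (C := 1 / 100)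
    (fun n => (S.stage n).isAreaPreservingLift.conjTranslation) (fun n => ?_) fun n => ?_
  · rw [approx, S.conjTranslation_succ (S.stage (n + 1)).rot_mem, S.rot_succ]
    exact (S.admissible n).norm_iteratedFDeriv_le
  · rw [approx, approx, conjTranslation_inv, conjTranslation_inv,
      S.conjTranslation_succ (neg_mem (S.stage (n + 1)).rot_mem), S.rot_succ]
    exact (S.admissible n).norm_iteratedFDeriv_inv_le

lemma exists_tendstoUniformly_conj_inv : ∃ K : R2 → R2, Continuous K ∧ Equivariant K ∧
    TendstoUniformly (fun n => ⇑(S.stage n).conj⁻¹) K atTop ∧ ∀ z, dist (K z) z ≤ 2 := by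
  have hconj (n : ℕ) := (S.stage n).isAreaPreservingLift
  have hdist (n : ℕ) (z : R2) :
      dist ((S.stage n).conj⁻¹ z) ((S.stage (n + 1)).conj⁻¹ z) ≤ 1 / 2 ^ n :=
    calc dist ((S.stage n).conj⁻¹ z) ((S.stage (n + 1)).conj⁻¹ z)
        ≤ 1 / (S.stage n).denom := by
          rw [S.stage_succ, dist_comm]
          exact Stage.dist_next_conj_inv_le _ z
      _ ≤ 1 / 2 ^ n :=
          one_div_le_one_div_of_le (by positivity) (by exact_mod_cast S.two_pow_le_denom n)
  obtain ⟨K, hK⟩ := exists_tendstoUniformly_of_dist_succ_le_geometric hdist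
  refine ⟨K, hK.continuous (.of_forall fun n => (hconj n).contDiff_inv.continuous),
    .of_tendsto (fun n => (hconj n).equivariant.perm_inv) hK.tendsto_at, hK, fun z => ?_⟩
  have h := dist_le_of_dist_succ_le_geometric (n := 0) (fun n _ => hdist n z) (hK.tendsto_at z)
  simpa [S.conj_zero, dist_comm] using h

lemma semiconj_of_tendsto {F K : R2 → R2} {ω : R2} (hKc : Continuous K)
    (hF : ∀ z, Tendsto (fun n => S.approx n z) atTop (𝓝 (F z)))
    (hK : TendstoUniformly (fun n => ⇑(S.stage n).conj⁻¹) K atTop)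
    (hω : Tendsto (fun n => (S.stage n).rot) atTop (𝓝 ω)) : Function.Semiconj K F (· + ω) := by
  intro z
  have h := hK.tendsto_comp hKc.continuousAt (hF z)
  simp only [approx, conjTranslation_apply, Equiv.Perm.inv_def, Equiv.symm_apply_apply] at h
  exact tendsto_nhds_unique h ((hK.tendsto_at z).add hω)

/-! ### The rotation vector -/

lemma exp_mul_dist_rot_succ_le {n k : ℕ} (hnk : n ≤ k) :
    Real.exp (n * (S.stage n).denom) * (S.stage n).denom *
      dist (S.stage k).rot (S.stage (k + 1)).rot ≤ tolerance k := by
  have hdenom : ((S.stage n).denom : ℝ) ≤ (S.stage k).denom := by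
    exact_mod_cast S.monotone_denom hnk
  rw [S.rot_succ, dist_self_add_right]
  refine le_trans ?_ (S.admissible k).exp_mul_norm_increment_le
  gcongr

lemma exists_tendsto_rot : ∃ ω, Tendsto (fun n => (S.stage n).rot) atTop (𝓝 ω) := by
  have hdist (k : ℕ) : dist (S.stage k).rot (S.stage (k + 1)).rot ≤ 1 / 50 / 2 / 2 ^ k := by
    have h := S.exp_mul_dist_rot_succ_le k.zero_le
    rw [S.denom_zero] at h
    norm_num [tolerance] at h ⊢
    exact h
  exact cauchySeq_tendsto_of_complete (cauchySeq_of_le_geometric_two hdist)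

variable {S} {ω : R2}

lemma exp_mul_dist_rot_le (hω : Tendsto (fun n => (S.stage n).rot) atTop (𝓝 ω)) (n : ℕ) :
    Real.exp (n * (S.stage n).denom) * (S.stage n).denom * dist (S.stage n).rot ω ≤
      2 * tolerance n := by
  set c : ℝ := Real.exp (n * (S.stage n).denom) * (S.stage n).denom
  have hdist (a b : R2) : dist (c • a) (c • b) = c * dist a b := by
    rw [dist_smul₀, Real.norm_of_nonneg (by positivity)]
  rw [← hdist]
  refine dist_le_of_dist_succ_le_geometric (u := fun k => c • (S.stage k).rot) (fun k hk => ?_)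
    (hω.const_smul c)
  rw [hdist]
  exact S.exp_mul_dist_rot_succ_le hk

lemma dist_nsmul_rot_le (hω : Tendsto (fun n => (S.stage n).rot) atTop (𝓝 ω)) {n N : ℕ}
    (hN : N ≤ (S.stage n).denom) : dist (N • (S.stage n).rot) (N • ω) ≤ 2 * tolerance n :=
  calc dist (N • (S.stage n).rot) (N • ω) = N * dist (S.stage n).rot ω := by
        rw [← Nat.cast_smul_eq_nsmul ℝ, ← Nat.cast_smul_eq_nsmul ℝ, dist_smul₀, Real.norm_natCast]
    _ ≤ Real.exp (n * (S.stage n).denom) * (S.stage n).denom * dist (S.stage n).rot ω := by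
        refine mul_le_mul_of_nonneg_right ?_ dist_nonneg
        calc (N : ℝ) ≤ (S.stage n).denom := by exact_mod_cast hN
          _ ≤ _ := le_mul_of_one_le_left (Nat.cast_nonneg _) (Real.one_le_exp (by positivity))
    _ ≤ 2 * tolerance n := exp_mul_dist_rot_le hω n

lemma exists_dist_nsmul_rot_succ_le (S : ConjugationScheme) (n : ℕ) (τ : R2) :
    ∃ N, 0 < N ∧ N ≤ (S.stage (n + 1)).denom ∧
      ∃ v : ℤ × ℤ, dist (N • (S.stage (n + 1)).rot) (τ + intVec v) ≤ 1 / S.param n := by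
  rw [S.stage_succ]
  exact Stage.exists_dist_nsmul_next_rot_le _ τ

lemma denseRange_nsmul_pr2 (hω : Tendsto (fun n => (S.stage n).rot) atTop (𝓝 ω)) :
    DenseRange fun N : ℕ => N • pr2 ω := by
  refine Metric.denseRange_iff.2 fun x r hr => ?_
  obtain ⟨τ, rfl⟩ := surjective_pr2 x
  have htol : Tendsto (fun n => 51 * tolerance n) atTop (𝓝 0) := by
    simpa using tendsto_tolerance.const_mul 51
  obtain ⟨n, hn⟩ := (htol.eventually_lt_const hr).exists
  obtain ⟨N, -, hN, v, hv⟩ := S.exists_dist_nsmul_rot_succ_le n τ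
  have hparam : 1 / (S.param n : ℝ) ≤ 50 * tolerance n :=
    calc 1 / (S.param n : ℝ) ≤ 1 / 2 ^ (n + 1) :=
          one_div_le_one_div_of_le (by positivity) (by exact_mod_cast (S.admissible n).two_pow_le)
      _ = 50 * tolerance n := by rw [tolerance, pow_succ]; ring
  refine ⟨N, ?_⟩
  calc dist (pr2 τ) (N • pr2 ω) = dist (pr2 (τ + intVec v)) (pr2 (N • ω)) := by
        rw [pr2_add_intVec, pr2_nsmul]
    _ ≤ dist (τ + intVec v) (N • ω) := dist_pr2_le _ _
    _ ≤ dist (N • (S.stage (n + 1)).rot) (τ + intVec v) +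
          dist (N • (S.stage (n + 1)).rot) (N • ω) := dist_triangle_left _ _ _
    _ ≤ 51 * tolerance n := by
        linarith [dist_nsmul_rot_le hω hN, two_mul_tolerance_succ n]
    _ < r := hn

lemma normT2_denom_smul_le (hω : Tendsto (fun n => (S.stage n).rot) atTop (𝓝 ω)) (n : ℕ) :
    normT2 (((S.stage n).denom : ℝ) • ω) ≤ Real.exp (-(n * (S.stage n).denom)) := by
  obtain ⟨p, hp⟩ := (S.stage n).rot_mem
  have hdist : ‖((S.stage n).denom : ℝ) • ω - intVec p‖ =
      (S.stage n).denom * dist (S.stage n).rot ω := by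
    rw [← hp, ← dist_eq_norm, dist_comm, dist_smul₀, Real.norm_natCast]
  calc normT2 (((S.stage n).denom : ℝ) • ω)
      ≤ 2 * ((S.stage n).denom * dist (S.stage n).rot ω) :=
        hdist ▸ (normT2_le _ p).trans (enorm2_le _)
    _ ≤ Real.exp (-(n * (S.stage n).denom)) := by
        rw [Real.exp_neg, ← one_div, le_div_iff₀' (Real.exp_pos _)]
        linarith [exp_mul_dist_rot_le hω n, tolerance_le n]

lemma frequently_normT2_le (hω : Tendsto (fun n => (S.stage n).rot) atTop (𝓝 ω)) (B : ℝ) :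
    ∃ᶠ n : ℕ in atTop, normT2 ((n : ℝ) • ω) ≤ Real.exp (-(B * n)) := by
  have hdenom : Tendsto (fun n => (S.stage n).denom) atTop atTop :=
    tendsto_atTop_mono (fun n => Nat.lt_two_pow_self.le.trans (S.two_pow_le_denom n)) tendsto_id
  refine hdenom.frequently (Eventually.frequently ?_)
  filter_upwards [eventually_ge_atTop ⌈B⌉₊] with n hn
  refine (normT2_denom_smul_le hω n).trans (Real.exp_le_exp.2 (neg_le_neg ?_))
  exact mul_le_mul_of_nonneg_right (Nat.ceil_le.1 hn) (Nat.cast_nonneg _)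

/-! ### Dynamics of the limit -/

section Dynamics

variable {F : R2 → R2} (hlim : TendstoUniformly (fun n => ⇑(S.approx n)) F atTop)
  (hFc : Continuous F)

include hlim hFc

lemma tendsto_iterate_approx (N : ℕ) (z : R2) :
    Tendsto (fun n => (S.approx n)^[N] z) atTop (𝓝 (F^[N] z)) := by
  induction N with
  | zero => exact tendsto_const_nhds
  | succ N ih =>
    simp only [Function.iterate_succ_apply']
    exact hlim.tendsto_comp hFc.continuousAt ih

lemma dist_iterate_approx_le {n N : ℕ} (hN : N ≤ (S.stage n).denom) (z : R2) :
    dist ((S.approx n)^[N] z) (F^[N] z) ≤ 2 * tolerance n := by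
  refine dist_le_of_dist_succ_le_geometric (u := fun n => (S.approx n)^[N] z) (fun k hk => ?_)
    (tendsto_iterate_approx hlim hFc N z)
  rw [approx_succ_iterate, approx_iterate, S.rot_succ, dist_comm]
  exact (S.admissible k).dist_conjTranslation_nsmul_le N (hN.trans (S.monotone_denom hk)) z

lemma exists_dist_iterate_descend_le (hF : Equivariant F) (n : ℕ) (τ : R2) : ∃ N, 0 < N ∧ ∀ z,
    dist ((descend F)^[N] (pr2 z)) (pr2 (conjTranslation (S.stage n).conj τ z)) ≤
      2 * tolerance n := by
  obtain ⟨N, hN_pos, hN, v, hv⟩ := S.exists_dist_nsmul_rot_succ_le n τ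
  refine ⟨N, hN_pos, fun z => ?_⟩
  set H := (S.stage n).conj
  have hequiv : H (H⁻¹ z + (τ + intVec v)) = conjTranslation H τ z + intVec v := by
    rw [← add_assoc, (S.stage n).isAreaPreservingLift.equivariant, conjTranslation_apply]
  have hiter := dist_iterate_approx_le hlim hFc hN z
  have hconj : dist ((S.approx (n + 1))^[N] z) (conjTranslation H τ z + intVec v) ≤
      tolerance n := by
    rw [approx_succ_iterate, ← hequiv, conjTranslation_apply]
    exact (S.admissible n).dist_conj_le _ _ ((dist_add_left _ _ _).trans_le hv)
  calc dist ((descend F)^[N] (pr2 z)) (pr2 (conjTranslation H τ z))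
      = dist (pr2 (F^[N] z)) (pr2 (conjTranslation H τ z + intVec v)) := by
        rw [pr2_add_intVec, (isLift_descend hF).iterate]
    _ ≤ dist (F^[N] z) (conjTranslation H τ z + intVec v) := dist_pr2_le _ _
    _ ≤ dist ((S.approx (n + 1))^[N] z) (F^[N] z) +
          dist ((S.approx (n + 1))^[N] z) (conjTranslation H τ z + intVec v) :=
        dist_triangle_left _ _ _
    _ ≤ 2 * tolerance n := by linarith [two_mul_tolerance_succ n]

lemma minimalMap_descend (hF : Equivariant F) : MinimalMap (descend F) := by
  intro x
  refine Metric.denseRange_iff.2 fun y r hr => ?_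
  obtain ⟨z, rfl⟩ := surjective_pr2 x
  obtain ⟨w, rfl⟩ := surjective_pr2 y
  have htol : Tendsto (fun n => 2 * tolerance n) atTop (𝓝 0) := by
    simpa using tendsto_tolerance.const_mul 2
  obtain ⟨n, hn⟩ := (htol.eventually_lt_const hr).exists
  obtain ⟨N, -, hN⟩ := exists_dist_iterate_descend_le hlim hFc hF n
    ((S.stage n).conj⁻¹ w - (S.stage n).conj⁻¹ z)
  refine ⟨N, ?_⟩
  rw [dist_comm]
  refine lt_of_le_of_lt ?_ hn
  simpa [conjTranslation_apply, Equiv.Perm.inv_def] using hN z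

end Dynamics

lemma dist_conj_markedPoint_le (S : ConjugationScheme) (n : ℕ) :
    dist ((S.stage n).conj (S.stage n).markedPoint) (0, 1 / 4) ≤ 1 / 50 - 2 * tolerance n := by
  induction n with
  | zero => simp [S.stage_zero, Stage.initial, Stage.markedPoint, tolerance]; norm_num
  | succ n ih =>
    have hstep := (S.admissible n).dist_next_conj_markedPoint_le
    rw [← S.stage_succ] at hstep
    linarith [dist_triangle ((S.stage (n + 1)).conj (S.stage (n + 1)).markedPoint)
      ((S.stage n).conj (S.stage n).markedPoint) (0, 1 / 4), two_mul_tolerance_succ n]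

lemma half_le_dist_pr2_neg : 1 / 2 ≤ dist (pr2 (0, 1 / 4)) (pr2 (-(0, 1 / 4))) := by
  have hsub : (0, 1 / 4) - -(0, 1 / 4) = ((0, 1 / 2) : R2) := by
    ext <;> norm_num
  rw [dist_eq_norm, ← pr2_sub, hsub]
  calc 1 / 2 = ‖((1 / 2 : ℝ) : AddCircle (1 : ℝ))‖ := by
        simpa using (AddCircle.norm_half_period_eq (1 : ℝ)).symm
    _ ≤ ‖pr2 (0, 1 / 2)‖ := norm_snd_le (pr2 (0, 1 / 2))

/-- The points `H (2 • u)` and `0`, where `u` is the marked point and `H` the conjugacy, are sent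
near `H u` and `H (-u) = -H u` by the conjugate of the translation by `-u`. -/
lemma exists_dist_lt_le_dist_iterate_descend {F : R2 → R2}
    (hlim : TendstoUniformly (fun n => ⇑(S.approx n)) F atTop) (hFc : Continuous F)
    (hF : Equivariant F) {ε : ℝ} (hε : 0 < ε) : ∃ (x y : T2) (N : ℕ), 0 < N ∧ dist x y < ε ∧
      1 / 4 ≤ dist ((descend F)^[N] x) ((descend F)^[N] y) := by
  obtain ⟨n, hn⟩ := (tendsto_tolerance.eventually_lt_const hε).exists
  set H := (S.stage (n + 1)).conj
  set u := (S.stage (n + 1)).markedPoint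
  have hnear : ‖H (2 • u)‖ ≤ tolerance n := by
    have h := (S.admissible n).norm_next_conj_two_nsmul_markedPoint_le
    rwa [← S.stage_succ] at h
  have hH_zero : H⁻¹ 0 = 0 := H.injective (by simp [H, Stage.conj_zero])
  obtain ⟨N, hN_pos, hN⟩ := exists_dist_iterate_descend_le hlim hFc hF (n + 1) (-u)
  have hx := hN (H (2 • u))
  have hy := hN 0
  rw [conjTranslation_apply, Equiv.Perm.inv_def, Equiv.symm_apply_apply, two_nsmul,
    add_neg_cancel_right, ← two_nsmul] at hx
  rw [conjTranslation_apply, hH_zero, zero_add, (S.stage (n + 1)).odd] at hy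
  have hu := S.dist_conj_markedPoint_le (n + 1)
  have hu_pos : dist (pr2 (H u)) (pr2 (0, 1 / 4)) ≤ 1 / 50 - 2 * tolerance (n + 1) :=
    (dist_pr2_le _ _).trans hu
  have hu_neg : dist (pr2 (-H u)) (pr2 (-(0, 1 / 4))) ≤ 1 / 50 - 2 * tolerance (n + 1) :=
    (dist_pr2_le _ _).trans ((dist_neg_neg _ _).trans_le hu)
  refine ⟨pr2 (H (2 • u)), pr2 0, N, hN_pos, ?_, ?_⟩
  · calc dist (pr2 (H (2 • u))) (pr2 0) ≤ dist (H (2 • u)) 0 := dist_pr2_le _ _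
      _ ≤ tolerance n := by rwa [dist_zero_right]
      _ < ε := hn
  · set x' := (descend F)^[N] (pr2 (H (2 • u)))
    set y' := (descend F)^[N] (pr2 0)
    have hx' : dist x' (pr2 (0, 1 / 4)) ≤ 1 / 50 := by
      linarith [dist_triangle x' (pr2 (H u)) (pr2 (0, 1 / 4))]
    have hy' : dist y' (pr2 (-(0, 1 / 4))) ≤ 1 / 50 := by
      linarith [dist_triangle y' (pr2 (-H u)) (pr2 (-(0, 1 / 4)))]
    linarith [dist_triangle4_left x' y' (pr2 (0, 1 / 4)) (pr2 (-(0, 1 / 4))), half_le_dist_pr2_neg]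

end ConjugationScheme

/-- **Proposition 6.1.** There exists an area-preserving, minimal, C^∞ pseudo-rotation f of 𝕋²
with bounded mean motion and super-Liouvillean totally irrational rotation vector such that for
every ε > 0 there are points x, y with d(x,y) < ε and an iterate N with
d(f^N(x), f^N(y)) ≥ 1/1000; in particular f is regularly semi-conjugate to an irrational
translation but not topologically conjugate to any translation. -/
theorem exists_nonlinearizable_minimal_pseudo_rotation :
    ∃ (f : T2 → T2) (F : R2 → R2) (ω : R2) (κ : ℝ),
      IsotopicToId f ∧ IsCrDiffeo ⊤ f ∧
      MeasurePreserving f (volume : Measure T2) volume ∧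
      MinimalMap f ∧
      IsLift F f ∧ rotSet F = {ω} ∧
      BoundedMeanMotion F ω κ ∧
      TotallyIrrationalVec ω ∧ SuperLiouville ω ∧
      (∀ ε : ℝ, 0 < ε → ∃ (x y : T2) (N : ℕ), 0 < N ∧ distT2 x y < ε ∧
        1 / 1000 ≤ distT2 (f^[N] x) (f^[N] y)) ∧
      RegSemiConj f (pr2 ω) ∧
      ¬ TopLinearizable f := by
  obtain ⟨S⟩ : Nonempty ConjugationScheme := inferInstance
  obtain ⟨F, hF, hlim⟩ := S.exists_limit
  obtain ⟨K, hKc, hK, hKlim, hK_dist⟩ := S.exists_tendstoUniformly_conj_inv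
  obtain ⟨ω, hω⟩ := S.exists_tendsto_rot
  have hFc : Continuous F := hF.contDiff.continuous
  have hsemi : Function.Semiconj K F (· + ω) := S.semiconj_of_tendsto hKc hlim.tendsto_at hKlim hω
  have hbmm := boundedMeanMotion_of_semiconj hsemi hK_dist
  have hdense := ConjugationScheme.denseRange_nsmul_pr2 hω
  have hirr := totallyIrrationalVec_of_denseRange hdense
  have hsens (ε : ℝ) (hε : 0 < ε) :=
    ConjugationScheme.exists_dist_lt_le_dist_iterate_descend hlim hFc hF.equivariant hε
  refine ⟨descend F, F, ω, 4 * 2, hF.isotopicToId_descend, hF.isCrDiffeo_descend,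
    hF.measurePreserving, ConjugationScheme.minimalMap_descend hlim hFc hF.equivariant, hF.isLift,
    hbmm.rotSet_eq, hbmm, hirr,
    hirr.superLiouville (ConjugationScheme.frequently_normT2_le hω), fun ε hε => ?_,
    regSemiConj_descend hF.equivariant hK hKc hsemi hdense,
    not_topLinearizable_of_sensitive (r := 1 / 4) (by norm_num) fun ε hε => ?_⟩
  · obtain ⟨x, y, N, hN, hxy, hfar⟩ := hsens (ε / 2) (half_pos hε)
    exact ⟨x, y, N, hN, by linarith [distT2_le x y],
      by linarith [dist_le_distT2 ((descend F)^[N] x) ((descend F)^[N] y)]⟩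
  · obtain ⟨x, y, N, -, hxy, hfar⟩ := hsens ε hε
    exact ⟨x, y, N, hxy, hfar⟩
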